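/- (Theorem: Initialization II.) Let Y_{(0)} = XA + Z_{(0)} with Z_{(0)} having i.i.d. N(0, (2σ)²) entries and A ∈ Θ(s,r,d,γ). Let A_{(0)} = argmin_{A' ∈ ℝ^{p×m}} ‖Y_{(0)} − XA'‖_F²/2 + λ_0 ‖A'‖_{2,1} with λ_0 = 4σ max_j ‖X_{*j}‖ (√m + √(4 log p)), r̂ = max{j : σ_j(XA_{(0)}) ≥ ση}, and let V_{(0)} be the matrix of top-r̂ right singular vectors of XA_{(0)}, where η ≥ 2C_0 √(s(m + 4 log p))/ξ for a sufficiently large constant C_0 depending on κ_±(s_*) and c_* and an absolute constant ξ ∈ (0,1]. Suppose Condition SE(s_*, c_*, K) holds with an absolute constant K > 1, s_* ≥ 2s and 6c_* ≤ √(s_*/s − 1), that σ√(s(m + 4 log p)) < c_1 d for a sufficiently small constant c_1 > 0, and that δ_r = σ_r(XA) ≥ (1+ξ)ση. Then with probability at least 1 − 1/p, r̂ = r and σ_r(V'V_{(0)}) > c_0, where V ∈ O(m,r) is the right singular vector matrix of XA and c_0 > 0 depends only on c_1, C_0, κ_±(s_*) and c_*. -/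

import Mathlib

open MeasureTheory ProbabilityTheory Matrix Set
open scoped ENNReal NNReal

noncomputable section

/-- Euclidean (ℓ₂) norm of a finitely indexed real vector. -/
def l2norm {I : Type*} [Fintype I] (v : I → ℝ) : ℝ := Real.sqrt (∑ i, v i ^ 2)

/-- Frobenius norm of a real matrix. -/
def frobNorm {I J : Type*} [Fintype I] [Fintype J] (M : Matrix I J ℝ) : ℝ :=
  Real.sqrt (∑ i, ∑ j, M i j ^ 2)

/-- ℓ₂/ℓ₁ norm: the sum of the ℓ₂ norms of the rows. -/
def norm21 {I J : Type*} [Fintype I] [Fintype J] (M : Matrix I J ℝ) : ℝ :=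
  ∑ i, l2norm (M i)

open Classical in
/-- Row support: indices of nonzero rows. -/
def rowSupport {I J : Type*} [Fintype I] [Fintype J] (M : Matrix I J ℝ) : Finset I :=
  Finset.univ.filter (fun i => M i ≠ 0)

/-- The j-th largest singular value (j ≥ 1), via the Courant–Fischer max–min
characterization: `σ_j(M) = max_{dim V = j} min_{v ∈ V, ‖v‖=1} ‖Mv‖`. -/
def singularValue {I J : Type*} [Fintype I] [Fintype J] (M : Matrix I J ℝ) (j : ℕ) : ℝ :=
  sSup { t | ∃ V : Submodule ℝ (J → ℝ), Module.finrank ℝ V = j ∧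
    t = sInf { u | ∃ v ∈ V, l2norm v = 1 ∧ u = l2norm (M.mulVec v) } }

/-- Operator norm (largest singular value). -/
def opNorm {I J : Type*} [Fintype I] [Fintype J] (M : Matrix I J ℝ) : ℝ :=
  sSup { t | ∃ v : J → ℝ, l2norm v = 1 ∧ t = l2norm (M.mulVec v) }

/-- Schatten-q norm. -/
def schattenNorm {I J : Type*} [Fintype I] [Fintype J] (M : Matrix I J ℝ) (q : ℝ) : ℝ :=
  (∑ i ∈ Finset.Icc 1 (min (Fintype.card I) (Fintype.card J)), singularValue M i ^ q) ^ (1 / q)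

/-- Squared lower k-sparse Riesz constant `κ₋²(k)`:
the minimum over column subsets B with |B| = k of the smallest eigenvalue of X_B' X_B. -/
def kappaMinusSq {n p : ℕ} (X : Matrix (Fin n) (Fin p) ℝ) (k : ℕ) : ℝ :=
  sInf { t | ∃ B : Finset (Fin p), B.card = k ∧ ∃ v : Fin p → ℝ,
    (∀ i, i ∉ B → v i = 0) ∧ l2norm v = 1 ∧ t = l2norm (X.mulVec v) ^ 2 }

/-- Squared upper k-sparse Riesz constant `κ₊²(k)`. -/
def kappaPlusSq {n p : ℕ} (X : Matrix (Fin n) (Fin p) ℝ) (k : ℕ) : ℝ :=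
  sSup { t | ∃ B : Finset (Fin p), B.card = k ∧ ∃ v : Fin p → ℝ,
    (∀ i, i ∉ B → v i = 0) ∧ l2norm v = 1 ∧ t = l2norm (X.mulVec v) ^ 2 }

def kappaMinus {n p : ℕ} (X : Matrix (Fin n) (Fin p) ℝ) (k : ℕ) : ℝ :=
  Real.sqrt (kappaMinusSq X k)

def kappaPlus {n p : ℕ} (X : Matrix (Fin n) (Fin p) ℝ) (k : ℕ) : ℝ :=
  Real.sqrt (kappaPlusSq X k)

/-- Membership in the parameter space Θ(s, r, d, γ): rank r, all nonzero singular values in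
(d, γd], and at most s nonzero rows. (Singular values are automatically nonincreasing.) -/
def memTheta {p m : ℕ} (A : Matrix (Fin p) (Fin m) ℝ) (s r : ℕ) (d γ : ℝ) : Prop :=
  A.rank = r ∧ 0 < d ∧ singularValue A 1 ≤ γ * d ∧ d < singularValue A r ∧
    (rowSupport A).card ≤ s

/-- `V` is a matrix of top-r right singular vectors of `M`: the columns of `V` are orthonormal
eigenvectors of `MᵀM`, the j-th column with eigenvalue `σ_j(M)²`. -/
def IsRightSingularVectors {I J : Type*} [Fintype I] [Fintype J] {r : ℕ}
    (M : Matrix I J ℝ) (V : Matrix J (Fin r) ℝ) : Prop :=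
  Vᵀ * V = 1 ∧ ∀ j : Fin r,
    (Mᵀ * M).mulVec (fun i => V i j) = (singularValue M (j.1 + 1)) ^ 2 • (fun i => V i j)

/-- `U` is a matrix of top-r left singular vectors of `M`. -/
def IsLeftSingularVectors {I J : Type*} [Fintype I] [Fintype J] {r : ℕ}
    (M : Matrix I J ℝ) (U : Matrix I (Fin r) ℝ) : Prop :=
  IsRightSingularVectors Mᵀ U

instance matrixMeasurableSpace {n m : ℕ} : MeasurableSpace (Matrix (Fin n) (Fin m) ℝ) :=
  (inferInstance : MeasurableSpace (Fin n → Fin m → ℝ))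

/-- Law of an n×m random matrix with i.i.d. N(0, v) entries. -/
def gaussianMatrix (n m : ℕ) (v : ℝ≥0) : Measure (Matrix (Fin n) (Fin m) ℝ) :=
  Measure.pi fun _ : Fin n => Measure.pi fun _ : Fin m => gaussianReal 0 v

open Classical in
/-- Kullback–Leibler divergence D(P‖Q). -/
def klDivM {Ω : Type*} [MeasurableSpace Ω] (P Q : Measure Ω) : ℝ≥0∞ :=
  if P ≪ Q ∧ Integrable (fun x => Real.log (P.rnDeriv Q x).toReal) P
  then ENNReal.ofReal (∫ x, Real.log (P.rnDeriv Q x).toReal ∂P)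
  else ∞

/-- ε-packing number of T with respect to the distance ρ: the maximal cardinality of a subset
of T whose pairwise ρ-distances are all at least ε. -/
def packingNumber {α : Type*} (T : Set α) (ρ : α → α → ℝ) (ε : ℝ) : ℕ :=
  sSup { k | ∃ S : Finset α, ↑S ⊆ T ∧ (∀ x ∈ S, ∀ y ∈ S, x ≠ y → ε ≤ ρ x y) ∧ S.card = k }

/-- Moore–Penrose pseudoinverse (characterized by the four Penrose equations). -/
def IsMoorePenrose {k : ℕ} (M Mi : Matrix (Fin k) (Fin k) ℝ) : Prop :=
  M * Mi * M = M ∧ Mi * M * Mi = Mi ∧ (M * Mi)ᵀ = M * Mi ∧ (Mi * M)ᵀ = Mi * M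


/-! ### Gaussian tail bounds -/

lemma aux_pdf (v : ℝ≥0) (hv : v ≠ 0) (q : ℝ≥0) (hq : q ≠ 0) (x : ℝ) :
    gaussianPDFReal 0 v x * Real.exp ((1 - 1 / (q : ℝ) ^ 2) / (2 * v) * x ^ 2)
      = q * gaussianPDFReal 0 (v * q ^ 2) x := by
  have hv' : (0 : ℝ) < v := by positivity
  have hq' : (0 : ℝ) < q := by positivity
  rw [gaussianPDFReal_def, gaussianPDFReal_def]
  simp only [sub_zero, NNReal.coe_mul, NNReal.coe_pow]
  rw [mul_assoc, ← Real.exp_add]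
  have h1 : Real.sqrt (2 * Real.pi * (v * (q : ℝ) ^ 2)) = Real.sqrt (2 * Real.pi * v) * q := by
    rw [← mul_assoc, Real.sqrt_mul' _ (by positivity), Real.sqrt_sq hq'.le]
  rw [h1]
  have h2 : -x ^ 2 / (2 * (v : ℝ)) + (1 - 1 / (q : ℝ) ^ 2) / (2 * v) * x ^ 2
      = -x ^ 2 / (2 * (v * (q : ℝ) ^ 2)) := by
    field_simp
    ring
  rw [h2]
  field_simp

lemma aux_integrable (v : ℝ≥0) (hv : v ≠ 0) (q : ℝ≥0) (hq : q ≠ 0) :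
    Integrable (fun x : ℝ => Real.exp ((1 - 1 / (q : ℝ) ^ 2) / (2 * v) * x ^ 2))
      (gaussianReal 0 v) := by
  rw [gaussianReal_of_var_ne_zero _ hv,
    integrable_withDensity_iff_integrable_smul' (measurable_gaussianPDF 0 v)
      (ae_of_all _ fun x => gaussianPDF_lt_top)]
  have : (fun x : ℝ => (gaussianPDF 0 v x).toReal •
      Real.exp ((1 - 1 / (q : ℝ) ^ 2) / (2 * v) * x ^ 2))
      = fun x => q * gaussianPDFReal 0 (v * q ^ 2) x := by
    funext x
    rw [toReal_gaussianPDF, smul_eq_mul, aux_pdf v hv q hq]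
  rw [this]
  exact (integrable_gaussianPDFReal _ _).const_mul _

lemma aux_integral (v : ℝ≥0) (hv : v ≠ 0) (q : ℝ≥0) (hq : q ≠ 0) :
    ∫ x : ℝ, Real.exp ((1 - 1 / (q : ℝ) ^ 2) / (2 * v) * x ^ 2) ∂(gaussianReal 0 v) = q := by
  rw [integral_gaussianReal_eq_integral_smul hv]
  simp_rw [smul_eq_mul, aux_pdf v hv q hq]
  rw [integral_const_mul, integral_gaussianPDFReal_eq_one, mul_one]
  exact mul_ne_zero hv (pow_ne_zero _ hq)

lemma chi_tail (m : ℕ) (hm : 1 ≤ m) (v : ℝ≥0) (hv : v ≠ 0) (t : ℝ) (ht : 0 ≤ t) :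
    (Measure.pi fun _ : Fin m => gaussianReal 0 v).real
      {y | v * (Real.sqrt m + t) ^ 2 ≤ ∑ k, y k ^ 2} ≤ Real.exp (-(t ^ 2 / 2)) := by
  have hm' : (0 : ℝ) < m := by exact_mod_cast hm
  have hsm : 0 < Real.sqrt m := Real.sqrt_pos.2 hm'
  set τ : ℝ := t / Real.sqrt m with hτ
  have hτ0 : 0 ≤ τ := by positivity
  have htτ : t = τ * Real.sqrt m := by rw [hτ]; field_simp
  set q : ℝ≥0 := ⟨1 + τ, by positivity⟩ with hqdef
  have hqr : (q : ℝ) = 1 + τ := rfl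
  have hq : q ≠ 0 := by
    intro h; have : (q : ℝ) = 0 := by rw [h]; rfl
    rw [hqr] at this; linarith
  have hq1 : (1 : ℝ) ≤ q := by rw [hqr]; linarith
  have hv' : (0 : ℝ) < v := by positivity
  set u : ℝ := (1 - 1 / (q : ℝ) ^ 2) / (2 * v) with hu
  have hu0 : 0 ≤ u := by
    rw [hu]
    apply div_nonneg _ (by positivity)
    have : 1 / (q : ℝ) ^ 2 ≤ 1 := by
      rw [div_le_one (by positivity)]
      exact one_le_pow₀ hq1
    linarith
  have hprod : (fun y : Fin m → ℝ => Real.exp (u * ∑ k, y k ^ 2))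
      = fun y => ∏ k, Real.exp (u * y k ^ 2) := by
    funext y
    rw [Finset.mul_sum, Real.exp_sum]
  have hintg : Integrable (fun y : Fin m → ℝ => Real.exp (u * ∑ k, y k ^ 2))
      (Measure.pi fun _ : Fin m => gaussianReal 0 v) := by
    rw [hprod]
    exact Integrable.fintype_prod (f := fun _ x => Real.exp (u * x ^ 2))
      fun _ => aux_integrable v hv q hq
  have hch := measure_ge_le_exp_mul_mgf (X := fun y : Fin m → ℝ => ∑ k, y k ^ 2)
    (μ := Measure.pi fun _ : Fin m => gaussianReal 0 v) (v * (Real.sqrt m + t) ^ 2) hu0 hintg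
  refine hch.trans ?_
  have hmgf : mgf (fun y : Fin m → ℝ => ∑ k, y k ^ 2)
      (Measure.pi fun _ : Fin m => gaussianReal 0 v) u = (q : ℝ) ^ m := by
    unfold mgf
    rw [hprod, integral_fintype_prod_eq_prod (f := fun _ x => Real.exp (u * x ^ 2))]
    simp only [hu, aux_integral v hv q hq]
    simp
  rw [hmgf]
  have hqe : (q : ℝ) ≤ Real.exp τ := by
    rw [hqr]; linarith [Real.add_one_le_exp τ]
  have : (q : ℝ) ^ m ≤ Real.exp (m * τ) := by
    rw [Real.exp_nat_mul]
    exact pow_le_pow_left₀ (by positivity) hqe m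
  calc _ ≤ Real.exp (-u * (v * (Real.sqrt m + t) ^ 2)) * Real.exp (m * τ) := by gcongr
    _ = Real.exp (-(t ^ 2 / 2)) := by
      rw [← Real.exp_add]
      congr 1
      have e1 : (Real.sqrt m + t) ^ 2 = m * (q : ℝ) ^ 2 := by
        rw [htτ, hqr]
        have := Real.sq_sqrt hm'.le
        linear_combination (1 + τ) ^ 2 * this
      have e2 : t ^ 2 = m * τ ^ 2 := by
        rw [htτ, mul_pow, Real.sq_sqrt hm'.le]; ring
      have hqpos : (0 : ℝ) < q := by linarith
      rw [e1, e2, hu]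
      have : -((1 - 1 / (q : ℝ) ^ 2) / (2 * v)) * (v * (m * (q : ℝ) ^ 2))
         = -(m * ((q : ℝ) ^ 2 - 1) / 2) := by
        field_simp
      rw [this, hqr]; ring

/-- The linear map sending z to the product of x transposed with z. -/
def lincomb {n m : ℕ} (x : Fin n → ℝ) : (Fin n → Fin m → ℝ) →L[ℝ] (Fin m → ℝ) :=
  ∑ i, x i • ContinuousLinearMap.proj i

lemma lincomb_apply {n m : ℕ} (x : Fin n → ℝ) (z : Fin n → Fin m → ℝ) (k : Fin m) :
    lincomb x z k = ∑ i, x i * z i k := by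
  simp [lincomb]

lemma charFunDual_gauss1 (v : ℝ≥0) (F : StrongDual ℝ ℝ) :
    charFunDual (gaussianReal 0 v) F = Complex.exp (-(v * (F 1) ^ 2 / 2 : ℝ)) := by
  have : F = (F 1) • (1 : StrongDual ℝ ℝ) := by
    ext; simp
  rw [charFunDual_eq_charFun_map_one]
  have h2 : (gaussianReal 0 v).map F = gaussianReal 0 (NNReal.mk ((F 1) ^ 2) (sq_nonneg _) * v) := by
    have h3 : (F : ℝ → ℝ) = fun x => F 1 * x := by
      funext x
      have := F.map_smul x (1 : ℝ)
      simp only [smul_eq_mul, mul_one] at this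
      rw [this, mul_comm]
    rw [h3, gaussianReal_map_const_mul]
    simp
  rw [h2, charFun_gaussianReal]
  congr 1
  push_cast
  simp
  ring

lemma map_lincomb {n m : ℕ} (x : Fin n → ℝ) (v : ℝ≥0) :
    Measure.map (lincomb x) (Measure.pi fun _ : Fin n => Measure.pi fun _ : Fin m => gaussianReal 0 v)
      = Measure.pi fun _ : Fin m => gaussianReal 0 (v * ∑ i, (Real.toNNReal (x i ^ 2))) := by
  apply Measure.ext_of_charFunDual
  ext F
  rw [charFunDual_map, charFunDual_pi, charFunDual_pi]
  simp_rw [charFunDual_pi, charFunDual_gauss1]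
  rw [Finset.prod_comm]
  apply Finset.prod_congr rfl
  intro k _
  rw [← Complex.exp_sum]
  congr 1
  have key : ∀ i : Fin n, (((F.comp (lincomb x)).comp
      (ContinuousLinearMap.single ℝ (fun _ : Fin n => Fin m → ℝ) i)).comp
      (ContinuousLinearMap.single ℝ (fun _ : Fin m => ℝ) k)) 1
      = x i * F (Pi.single k 1) := by
    intro i
    simp only [ContinuousLinearMap.comp_apply, ContinuousLinearMap.single_apply]
    rw [← smul_eq_mul, ← F.map_smul]
    congr 1
    ext k'
    rw [lincomb_apply, Finset.sum_eq_single i]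
    · simp
    · intro b _ hb
      simp [hb]
    · simp
  simp_rw [key]
  simp only [ContinuousLinearMap.comp_apply, ContinuousLinearMap.single_apply]
  rw [Finset.sum_neg_distrib]
  congr 1
  rw [← Complex.ofReal_sum]
  congr 1
  push_cast
  have : ∀ i, max (x i ^ 2) 0 = x i ^ 2 := fun i => max_eq_left (sq_nonneg _)
  simp only [Real.coe_toNNReal', this]
  simp_rw [mul_pow]
  rw [Finset.mul_sum, Finset.sum_mul, Finset.sum_div]
  apply Finset.sum_congr rfl
  intros; ring

lemma column_tail {n m : ℕ} (hm : 1 ≤ m) (x : Fin n → ℝ) (τ t : ℝ) (hτ : 0 < τ) (ht : 0 ≤ t) :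
    (gaussianMatrix n m (Real.toNNReal (τ ^ 2)))
      {z | τ * l2norm x * (Real.sqrt m + t) < l2norm (fun k => ∑ i, x i * z i k)}
      ≤ ENNReal.ofReal (Real.exp (-(t ^ 2 / 2))) := by
  by_cases hx : l2norm x = 0
  · have hx0 : ∀ i, x i = 0 := by
      intro i
      unfold l2norm at hx
      rw [Real.sqrt_eq_zero (Finset.sum_nonneg fun _ _ => sq_nonneg _),
        Finset.sum_eq_zero_iff_of_nonneg (fun _ _ => sq_nonneg _)] at hx
      exact pow_eq_zero_iff (two_ne_zero) |>.1 (hx i (Finset.mem_univ _))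
    have : {z : Matrix (Fin n) (Fin m) ℝ | τ * l2norm x * (Real.sqrt m + t) <
        l2norm (fun k => ∑ i, x i * z i k)} = ∅ := by
      ext z
      simp [hx0, l2norm]
    rw [this]; simp
  · set v : ℝ≥0 := Real.toNNReal (τ ^ 2) * ∑ i, (Real.toNNReal (x i ^ 2)) with hvdef
    have hxx : l2norm x ^ 2 = ∑ i, x i ^ 2 :=
      Real.sq_sqrt (Finset.sum_nonneg fun _ _ => sq_nonneg _)
    have hvr : (v : ℝ) = τ ^ 2 * l2norm x ^ 2 := by
      rw [hxx, hvdef]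
      push_cast
      have : ∀ i, max (x i ^ 2) 0 = x i ^ 2 := fun i => max_eq_left (sq_nonneg _)
      simp only [Real.coe_toNNReal', this, max_eq_left (sq_nonneg τ)]
    have hv : v ≠ 0 := by
      intro h
      have : (v : ℝ) = 0 := by rw [h]; rfl
      rw [hvr] at this
      have : 0 < τ ^ 2 * l2norm x ^ 2 := by positivity
      linarith
    have hl : 0 ≤ l2norm x := Real.sqrt_nonneg _
    have hct := chi_tail m hm v hv t ht
    rw [hvdef, ← map_lincomb, ← hvdef] at hct
    have hms : MeasurableSet {y : Fin m → ℝ | v * (Real.sqrt m + t) ^ 2 ≤ ∑ k, y k ^ 2} := by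
      apply measurableSet_le <;> fun_prop
    rw [measureReal_def, Measure.map_apply (by fun_prop) hms] at hct
    have hfin : IsProbabilityMeasure (Measure.pi fun _ : Fin n =>
        Measure.pi fun _ : Fin m => gaussianReal 0 (Real.toNNReal (τ ^ 2))) := inferInstance
    rw [← ENNReal.le_ofReal_iff_toReal_le (measure_ne_top _ _) (Real.exp_pos _).le] at hct
    refine le_trans (measure_mono ?_) hct
    intro z hz
    simp only [Set.mem_ofPred_eq] at hz ⊢
    rw [hvr]
    have h0 : 0 ≤ τ * l2norm x * (Real.sqrt m + t) := by positivity
    have := pow_le_pow_left₀ h0 hz.le 2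
    have h3 : l2norm (fun k => ∑ i, x i * z i k) ^ 2 = ∑ k, (lincomb x z k) ^ 2 := by
      unfold l2norm
      rw [Real.sq_sqrt (Finset.sum_nonneg fun _ _ => sq_nonneg _)]
      exact Finset.sum_congr rfl fun k _ => congrArg (· ^ 2) (lincomb_apply x z k).symm
    rw [h3] at this
    calc _ = (τ * l2norm x * (Real.sqrt m + t)) ^ 2 := by ring
      _ ≤ _ := this


/-! ### Norm basics -/

lemma l2norm_nonneg {I : Type*} [Fintype I] (v : I → ℝ) : 0 ≤ l2norm v := Real.sqrt_nonneg _

lemma l2norm_sq {I : Type*} [Fintype I] (v : I → ℝ) : l2norm v ^ 2 = ∑ i, v i ^ 2 :=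
  Real.sq_sqrt (Finset.sum_nonneg fun _ _ => sq_nonneg _)

lemma l2norm_eq_norm {I : Type*} [Fintype I] (v : I → ℝ) : l2norm v = ‖WithLp.toLp 2 v‖ := by
  rw [EuclideanSpace.norm_eq]; simp [l2norm]

lemma l2norm_add_le {I : Type*} [Fintype I] (v w : I → ℝ) :
    l2norm (v + w) ≤ l2norm v + l2norm w := by
  simp only [l2norm_eq_norm, WithLp.toLp_add]; exact norm_add_le _ _

lemma l2norm_neg {I : Type*} [Fintype I] (v : I → ℝ) : l2norm (-v) = l2norm v := by
  simp only [l2norm_eq_norm, WithLp.toLp_neg, norm_neg]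

lemma l2norm_sub_le {I : Type*} [Fintype I] (v w : I → ℝ) :
    l2norm v - l2norm w ≤ l2norm (v - w) := by
  simp only [l2norm_eq_norm, WithLp.toLp_sub]; exact norm_sub_norm_le _ _

lemma l2norm_smul {I : Type*} [Fintype I] (c : ℝ) (v : I → ℝ) :
    l2norm (c • v) = |c| * l2norm v := by
  simp only [l2norm_eq_norm, WithLp.toLp_smul, norm_smul, Real.norm_eq_abs]

lemma l2norm_zero {I : Type*} [Fintype I] : l2norm (0 : I → ℝ) = 0 := by simp [l2norm]

lemma l2norm_eq_zero {I : Type*} [Fintype I] {v : I → ℝ} : l2norm v = 0 ↔ v = 0 := by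
  rw [l2norm_eq_norm, norm_eq_zero]; simp

lemma dot_le {I : Type*} [Fintype I] (v w : I → ℝ) : ∑ i, v i * w i ≤ l2norm v * l2norm w :=
  Real.sum_mul_le_sqrt_mul_sqrt _ _ _

lemma frobNorm_nonneg {I J : Type*} [Fintype I] [Fintype J] (M : Matrix I J ℝ) :
    0 ≤ frobNorm M := Real.sqrt_nonneg _

lemma frobNorm_sq {I J : Type*} [Fintype I] [Fintype J] (M : Matrix I J ℝ) :
    frobNorm M ^ 2 = ∑ i, ∑ j, M i j ^ 2 :=
  Real.sq_sqrt (Finset.sum_nonneg fun _ _ => Finset.sum_nonneg fun _ _ => sq_nonneg _)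

lemma frobNorm_sq_rows {I J : Type*} [Fintype I] [Fintype J] (M : Matrix I J ℝ) :
    frobNorm M ^ 2 = ∑ i, l2norm (M i) ^ 2 := by
  rw [frobNorm_sq]; simp_rw [l2norm_sq]

lemma frobNorm_sq_cols {I J : Type*} [Fintype I] [Fintype J] (M : Matrix I J ℝ) :
    frobNorm M ^ 2 = ∑ j, l2norm (fun i => M i j) ^ 2 := by
  rw [frobNorm_sq, Finset.sum_comm]; simp_rw [l2norm_sq]

/-- operator norm bounded by Frobenius norm -/
lemma l2norm_mulVec_le {I J : Type*} [Fintype I] [Fintype J] (M : Matrix I J ℝ) (v : J → ℝ) :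
    l2norm (M.mulVec v) ≤ frobNorm M * l2norm v := by
  apply abs_le_of_sq_le_sq' _ (mul_nonneg (frobNorm_nonneg _) (l2norm_nonneg _)) |>.2
  rw [l2norm_sq, mul_pow, frobNorm_sq_rows, Finset.sum_mul]
  apply Finset.sum_le_sum
  intro i _
  rw [l2norm_sq, l2norm_sq]
  exact Finset.sum_mul_sq_le_sq_mul_sq _ _ _

/-- Frobenius inner product. -/
def ip {I J : Type*} [Fintype I] [Fintype J] (M N : Matrix I J ℝ) : ℝ := ∑ i, ∑ j, M i j * N i j

section ip
variable {I J : Type*} [Fintype I] [Fintype J]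

lemma ip_self (M : Matrix I J ℝ) : ip M M = frobNorm M ^ 2 := by
  rw [frobNorm_sq]; simp [ip, sq]

lemma ip_comm (M N : Matrix I J ℝ) : ip M N = ip N M := by
  simp [ip, mul_comm]

lemma ip_add_right (M N P : Matrix I J ℝ) : ip M (N + P) = ip M N + ip M P := by
  simp [ip, mul_add, Finset.sum_add_distrib]

lemma ip_add_left (M N P : Matrix I J ℝ) : ip (M + N) P = ip M P + ip N P := by
  simp [ip, add_mul, Finset.sum_add_distrib]

lemma ip_smul_right (c : ℝ) (M N : Matrix I J ℝ) : ip M (c • N) = c * ip M N := by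
  simp only [ip, Finset.mul_sum, Matrix.smul_apply, smul_eq_mul]
  exact Finset.sum_congr rfl fun _ _ => Finset.sum_congr rfl fun _ _ => by ring

lemma ip_smul_left (c : ℝ) (M N : Matrix I J ℝ) : ip (c • M) N = c * ip M N := by
  rw [ip_comm, ip_smul_right, ip_comm]

lemma ip_le (M N : Matrix I J ℝ) : ip M N ≤ frobNorm M * frobNorm N := by
  have : ip M N ≤ ∑ i, l2norm (M i) * l2norm (N i) :=
    Finset.sum_le_sum fun i _ => dot_le _ _
  refine this.trans ((Real.sum_mul_le_sqrt_mul_sqrt _ _ _).trans (le_of_eq ?_))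
  simp_rw [← frobNorm_sq_rows, Real.sqrt_sq (frobNorm_nonneg _)]

lemma ip_mul {K : Type*} [Fintype K] (X : Matrix K I ℝ) (Z : Matrix K J ℝ) (D : Matrix I J ℝ) :
    ip Z (X * D) = ip (fun i k => ∑ l, X l i * Z l k) D := by
  simp only [ip, Matrix.mul_apply, Finset.mul_sum, Finset.sum_mul]
  have h1 : ∀ l : K, ∑ k, ∑ i, Z l k * (X l i * D i k) = ∑ i, ∑ k, X l i * Z l k * D i k := by
    intro l
    rw [Finset.sum_comm]
    exact Finset.sum_congr rfl fun _ _ => Finset.sum_congr rfl fun _ _ => by ring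
  simp_rw [h1]
  rw [Finset.sum_comm]
  refine Finset.sum_congr rfl fun i _ => ?_
  rw [Finset.sum_comm]
end ip

/-! ### Restricted eigenvalues -/

lemma kappaMinusSq_bdd {n p : ℕ} (X : Matrix (Fin n) (Fin p) ℝ) (k : ℕ) :
    BddBelow { t | ∃ B : Finset (Fin p), B.card = k ∧ ∃ v : Fin p → ℝ,
    (∀ i, i ∉ B → v i = 0) ∧ l2norm v = 1 ∧ t = l2norm (X.mulVec v) ^ 2 } := by
  refine ⟨0, ?_⟩
  rintro t ⟨B, _, v, _, _, rfl⟩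
  positivity

lemma kappaPlusSq_bdd {n p : ℕ} (X : Matrix (Fin n) (Fin p) ℝ) (k : ℕ) :
    BddAbove { t | ∃ B : Finset (Fin p), B.card = k ∧ ∃ v : Fin p → ℝ,
    (∀ i, i ∉ B → v i = 0) ∧ l2norm v = 1 ∧ t = l2norm (X.mulVec v) ^ 2 } := by
  refine ⟨frobNorm X ^ 2, ?_⟩
  rintro t ⟨B, _, v, _, hv, rfl⟩
  have := l2norm_mulVec_le X v
  rw [hv, mul_one] at this
  exact pow_le_pow_left₀ (l2norm_nonneg _) this 2

lemma kappaMinusSq_nonneg {n p : ℕ} (X : Matrix (Fin n) (Fin p) ℝ) (k : ℕ) :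
    0 ≤ kappaMinusSq X k := by
  apply Real.sInf_nonneg
  rintro t ⟨B, _, v, _, hv, rfl⟩
  positivity

lemma kappaPlusSq_nonneg {n p : ℕ} (X : Matrix (Fin n) (Fin p) ℝ) (k : ℕ) :
    0 ≤ kappaPlusSq X k := by
  apply Real.sSup_nonneg
  rintro t ⟨B, _, v, _, hv, rfl⟩
  positivity

lemma kappaMinusSq_eq_zero {n p : ℕ} (X : Matrix (Fin n) (Fin p) ℝ) (k : ℕ) (hk : p < k) :
    kappaMinusSq X k = 0 := by
  have : { t | ∃ B : Finset (Fin p), B.card = k ∧ ∃ v : Fin p → ℝ,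
    (∀ i, i ∉ B → v i = 0) ∧ l2norm v = 1 ∧ t = l2norm (X.mulVec v) ^ 2 } = ∅ := by
    ext t
    simp only [Set.mem_ofPred_eq, Set.mem_empty_iff_false, iff_false]
    rintro ⟨B, hB, _⟩
    have := Finset.card_le_univ B
    simp at this
    omega
  unfold kappaMinusSq
  rw [this, Real.sInf_empty]

lemma exists_unit {I : Type*} [Fintype I] (v : I → ℝ) (hv : v ≠ 0) :
    ∃ w : I → ℝ, l2norm w = 1 ∧ v = l2norm v • w := by
  have h : l2norm v ≠ 0 := fun h => hv (l2norm_eq_zero.1 h)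
  refine ⟨(l2norm v)⁻¹ • v, ?_, ?_⟩
  · rw [l2norm_smul, abs_of_nonneg (inv_nonneg.2 (l2norm_nonneg _)), inv_mul_cancel₀ h]
  · rw [smul_smul, mul_inv_cancel₀ h, one_smul]

lemma kappa_lower_vec {n p : ℕ} (X : Matrix (Fin n) (Fin p) ℝ) (k : ℕ) (B : Finset (Fin p))
    (hB : B.card ≤ k) (v : Fin p → ℝ) (hv : ∀ i, i ∉ B → v i = 0) :
    kappaMinusSq X k * l2norm v ^ 2 ≤ l2norm (X.mulVec v) ^ 2 := by
  by_cases hk : p < k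
  · rw [kappaMinusSq_eq_zero X k hk, zero_mul]; positivity
  by_cases h0 : v = 0
  · rw [h0, l2norm_zero]; simp; positivity
  obtain ⟨w, hw, hvw⟩ := exists_unit v h0
  obtain ⟨B', hBB', hB'⟩ := Finset.exists_superset_card_eq hB (by simpa using not_lt.1 hk)
  have hn : l2norm v ≠ 0 := fun h => h0 (l2norm_eq_zero.1 h)
  have hle : kappaMinusSq X k ≤ l2norm (X.mulVec w) ^ 2 := by
    apply csInf_le (kappaMinusSq_bdd X k)
    refine ⟨B', hB', w, ?_, hw, rfl⟩
    intro i hi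
    have h1 := hv i (fun h => hi (hBB' h))
    rw [hvw] at h1
    simpa [hn] using h1
  have h2 : l2norm (X.mulVec v) ^ 2 = l2norm (X.mulVec w) ^ 2 * l2norm v ^ 2 := by
    conv_lhs => rw [hvw, Matrix.mulVec_smul, l2norm_smul, mul_pow, sq_abs]
    ring
  rw [h2]
  gcongr

lemma kappa_upper_vec {n p : ℕ} (X : Matrix (Fin n) (Fin p) ℝ) (k : ℕ) (hk : k ≤ p)
    (B : Finset (Fin p))
    (hB : B.card ≤ k) (v : Fin p → ℝ) (hv : ∀ i, i ∉ B → v i = 0) :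
    l2norm (X.mulVec v) ^ 2 ≤ kappaPlusSq X k * l2norm v ^ 2 := by
  by_cases h0 : v = 0
  · rw [h0, l2norm_zero]; simp [l2norm_zero]
  obtain ⟨w, hw, hvw⟩ := exists_unit v h0
  obtain ⟨B', hBB', hB'⟩ := Finset.exists_superset_card_eq hB (by simpa using hk)
  have hn : l2norm v ≠ 0 := fun h => h0 (l2norm_eq_zero.1 h)
  have hle : l2norm (X.mulVec w) ^ 2 ≤ kappaPlusSq X k := by
    apply le_csSup (kappaPlusSq_bdd X k)
    refine ⟨B', hB', w, ?_, hw, rfl⟩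
    intro i hi
    have h1 := hv i (fun h => hi (hBB' h))
    rw [hvw] at h1
    simpa [hn] using h1
  have h2 : l2norm (X.mulVec v) ^ 2 = l2norm (X.mulVec w) ^ 2 * l2norm v ^ 2 := by
    conv_lhs => rw [hvw, Matrix.mulVec_smul, l2norm_smul, mul_pow, sq_abs]
    ring
  rw [h2]
  gcongr

lemma kappa_lower {n p m : ℕ} (X : Matrix (Fin n) (Fin p) ℝ) (k : ℕ) (B : Finset (Fin p))
    (hB : B.card ≤ k) (U : Matrix (Fin p) (Fin m) ℝ) (hU : ∀ i, i ∉ B → ∀ j, U i j = 0) :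
    kappaMinusSq X k * frobNorm U ^ 2 ≤ frobNorm (X * U) ^ 2 := by
  rw [frobNorm_sq_cols, frobNorm_sq_cols, Finset.mul_sum]
  exact Finset.sum_le_sum fun j _ =>
    kappa_lower_vec X k B hB (fun i => U i j) fun i hi => hU i hi j

lemma kappa_upper {n p m : ℕ} (X : Matrix (Fin n) (Fin p) ℝ) (k : ℕ) (hk : k ≤ p)
    (B : Finset (Fin p))
    (hB : B.card ≤ k) (U : Matrix (Fin p) (Fin m) ℝ) (hU : ∀ i, i ∉ B → ∀ j, U i j = 0) :
    frobNorm (X * U) ^ 2 ≤ kappaPlusSq X k * frobNorm U ^ 2 := by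
  rw [frobNorm_sq_cols, frobNorm_sq_cols, Finset.mul_sum]
  exact Finset.sum_le_sum fun j _ =>
    kappa_upper_vec X k hk B hB (fun i => U i j) fun i hi => hU i hi j

/-- near-orthogonality of disjoint sparse pieces -/
lemma sparse_ortho {n p m : ℕ} (X : Matrix (Fin n) (Fin p) ℝ) (k : ℕ) (hk : k ≤ p) (δ : ℝ)
    (hδ : 0 ≤ δ) (hd : kappaPlusSq X k - kappaMinusSq X (2 * k) ≤ δ)
    (B C : Finset (Fin p)) (hB : B.card ≤ k) (hC : C.card ≤ k) (hBC : Disjoint B C)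
    (U W : Matrix (Fin p) (Fin m) ℝ) (hU : ∀ i, i ∉ B → ∀ j, U i j = 0)
    (hW : ∀ i, i ∉ C → ∀ j, W i j = 0) :
    |ip (X * U) (X * W)| ≤ δ * frobNorm U * frobNorm W := by
  have h0 : ip U W = 0 := by
    apply Finset.sum_eq_zero; intro i _
    apply Finset.sum_eq_zero; intro j _
    by_cases hi : i ∈ B
    · rw [hW i (Finset.disjoint_left.1 hBC hi)]; simp
    · rw [hU i hi]; simp
  have hquad : ∀ t : ℝ, 0 ≤ (δ * frobNorm W ^ 2) * (t * t) + (2 * ip (X * U) (X * W)) * t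
      + δ * frobNorm U ^ 2 := by
    intro t
    have h1 := kappa_lower X (2 * k) (B ∪ C) ((Finset.card_union_le _ _).trans (by omega))
      (U + t • W) (by
        intro i hi j
        rw [Finset.mem_union, not_or] at hi
        simp [hU i hi.1 j, hW i hi.2 j])
    have e1 : frobNorm (U + t • W) ^ 2 = frobNorm U ^ 2 + t ^ 2 * frobNorm W ^ 2 := by
      rw [← ip_self, ip_add_left, ip_add_right, ip_add_right, ip_smul_left, ip_smul_left,
        ip_smul_right, ip_smul_right, ip_comm W U, h0, ip_self, ip_self]; ring
    have e2 : frobNorm (X * (U + t • W)) ^ 2 = frobNorm (X * U) ^ 2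
        + 2 * t * ip (X * U) (X * W) + t ^ 2 * frobNorm (X * W) ^ 2 := by
      rw [Matrix.mul_add, Matrix.mul_smul]
      rw [← ip_self, ip_add_left, ip_add_right, ip_add_right, ip_smul_left, ip_smul_left,
        ip_smul_right, ip_smul_right, ip_comm (X * W) (X * U), ip_self, ip_self]; ring
    rw [e1, e2] at h1
    have h2 := kappa_upper X k hk B hB U hU
    have h3 := kappa_upper X k hk C hC W hW
    have h4 := mul_le_mul_of_nonneg_left h3 (sq_nonneg t)
    have h5 : (kappaPlusSq X k - kappaMinusSq X (2 * k)) * (frobNorm U ^ 2 + t ^ 2 * frobNorm W ^ 2)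
      ≤ δ * (frobNorm U ^ 2 + t ^ 2 * frobNorm W ^ 2) := by gcongr
    nlinarith
  have hdisc := discrim_le_zero hquad
  unfold discrim at hdisc
  apply abs_le_of_sq_le_sq _ (mul_nonneg (mul_nonneg hδ (frobNorm_nonneg _)) (frobNorm_nonneg _))
  nlinarith

/-- restriction of a matrix to a set of rows -/
def restr {p m : ℕ} (D : Matrix (Fin p) (Fin m) ℝ) (T : Finset (Fin p)) :
    Matrix (Fin p) (Fin m) ℝ := fun i j => if i ∈ T then D i j else 0

lemma restr_not_mem {p m : ℕ} (D : Matrix (Fin p) (Fin m) ℝ) (T : Finset (Fin p)) :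
    ∀ i, i ∉ T → ∀ j, restr D T i j = 0 := by
  intro i hi j; simp [restr, hi]

lemma restr_union {p m : ℕ} (D : Matrix (Fin p) (Fin m) ℝ) (T R : Finset (Fin p))
    (h : Disjoint T R) : restr D (T ∪ R) = restr D T + restr D R := by
  ext i j
  have : i ∈ T → i ∉ R := fun hi => Finset.disjoint_left.1 h hi
  simp only [restr, Matrix.add_apply, Finset.mem_union]
  by_cases h1 : i ∈ T <;> by_cases h2 : i ∈ R <;> simp_all

lemma restr_univ {p m : ℕ} (D : Matrix (Fin p) (Fin m) ℝ) : restr D Finset.univ = D := by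
  ext i j; simp [restr]

lemma restr_row {p m : ℕ} (D : Matrix (Fin p) (Fin m) ℝ) (T : Finset (Fin p)) (i : Fin p) :
    l2norm (restr D T i) = if i ∈ T then l2norm (D i) else 0 := by
  by_cases h : i ∈ T
  · simp [restr, l2norm, h]
  · simp [restr, l2norm, h]

lemma frob_restr {p m : ℕ} (D : Matrix (Fin p) (Fin m) ℝ) (T : Finset (Fin p)) :
    frobNorm (restr D T) ^ 2 = ∑ i ∈ T, l2norm (D i) ^ 2 := by
  rw [frobNorm_sq_rows]
  simp_rw [restr_row]
  rw [← Finset.sum_filter_add_sum_filter_not Finset.univ (· ∈ T)]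
  rw [Finset.sum_congr (g := fun i => l2norm (D i) ^ 2) rfl (by
    intro i hi; rw [Finset.mem_filter] at hi; simp [hi.2])]
  rw [Finset.sum_eq_zero (s := Finset.univ.filter (fun i => i ∉ T)) (by
    intro i hi; rw [Finset.mem_filter] at hi; simp [hi.2])]
  simp

lemma frob_restr_le {p m : ℕ} (D : Matrix (Fin p) (Fin m) ℝ) (T : Finset (Fin p)) (l : ℕ)
    (hT : T.card ≤ l) (μ : ℝ) (hμ0 : 0 ≤ μ) (hμ : ∀ i ∈ T, l2norm (D i) ≤ μ) :
    frobNorm (restr D T) ≤ Real.sqrt l * μ := by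
  apply abs_le_of_sq_le_sq' _ (by positivity) |>.2
  rw [frob_restr, mul_pow, Real.sq_sqrt (by positivity)]
  calc ∑ i ∈ T, l2norm (D i) ^ 2 ≤ ∑ i ∈ T, μ ^ 2 :=
        Finset.sum_le_sum fun i hi => pow_le_pow_left₀ (l2norm_nonneg _) (hμ i hi) 2
    _ = T.card * μ ^ 2 := by simp
    _ ≤ l * μ ^ 2 := by gcongr

/-- existence of a top block -/
lemma exists_top {α : Type*} [DecidableEq α] (w : α → ℝ) (l : ℕ) :
    ∀ R : Finset α, l ≤ R.card →
      ∃ T ⊆ R, T.card = l ∧ ∀ i ∈ T, ∀ j ∈ R \ T, w j ≤ w i := by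
  induction l with
  | zero => intro R _; exact ⟨∅, by simp, by simp, by simp⟩
  | succ l ih =>
    intro R hR
    have hne : R.Nonempty := Finset.card_pos.1 (by omega)
    obtain ⟨x, hx, hmax⟩ := Finset.exists_max_image R w hne
    obtain ⟨T, hTR, hTc, hT⟩ := ih (R.erase x) (by rw [Finset.card_erase_of_mem hx]; omega)
    have hxT : x ∉ T := fun h => by simpa using hTR h
    refine ⟨insert x T, ?_, ?_, ?_⟩
    · intro y hy
      rcases Finset.mem_insert.1 hy with rfl | h
      · exact hx
      · exact Finset.mem_of_mem_erase (hTR h)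
    · rw [Finset.card_insert_of_notMem hxT, hTc]
    · intro i hi j hj
      rw [Finset.mem_sdiff, Finset.mem_insert, not_or] at hj
      rcases Finset.mem_insert.1 hi with rfl | h
      · exact hmax j hj.1
      · exact hT i h j (by simp [hj.1, hj.2.1, hj.2.2])

lemma block_bound {n p m : ℕ} (X : Matrix (Fin n) (Fin p) ℝ) (k : ℕ) (hk : k ≤ p) (δ : ℝ)
    (hδ : 0 ≤ δ) (hd : kappaPlusSq X k - kappaMinusSq X (2 * k) ≤ δ) (l : ℕ) (hl : 1 ≤ l)
    (hlk : l ≤ k) (D U : Matrix (Fin p) (Fin m) ℝ) (B : Finset (Fin p)) (hB : B.card ≤ k)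
    (hU : ∀ i, i ∉ B → ∀ j, U i j = 0) :
    ∀ (N : ℕ) (R : Finset (Fin p)), R.card ≤ N → Disjoint B R → ∀ μ : ℝ, 0 ≤ μ →
      (∀ i ∈ R, l2norm (D i) ≤ μ) →
      |ip (X * U) (X * restr D R)| ≤
        δ * frobNorm U * (Real.sqrt l * μ + (∑ i ∈ R, l2norm (D i)) / Real.sqrt l) := by
  have hl' : (0 : ℝ) < l := by exact_mod_cast hl
  have hsl : 0 < Real.sqrt l := Real.sqrt_pos.2 hl'
  have hc : 0 ≤ δ * frobNorm U := mul_nonneg hδ (frobNorm_nonneg _)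
  have hsum : ∀ R : Finset (Fin p), 0 ≤ ∑ i ∈ R, l2norm (D i) :=
    fun R => Finset.sum_nonneg fun _ _ => l2norm_nonneg _
  have hone : ∀ (R : Finset (Fin p)), R.card ≤ l → Disjoint B R → ∀ μ : ℝ, 0 ≤ μ →
      (∀ i ∈ R, l2norm (D i) ≤ μ) →
      |ip (X * U) (X * restr D R)| ≤ δ * frobNorm U * (Real.sqrt l * μ) := by
    intro R hR hBR μ hμ0 hμ
    have h1 := sparse_ortho X k hk δ hδ hd B R hB (hR.trans hlk) hBR U (restr D R) hU
      (restr_not_mem D R)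
    exact h1.trans (mul_le_mul_of_nonneg_left (frob_restr_le D R l hR μ hμ0 hμ) hc)
  intro N
  induction N with
  | zero =>
    intro R hR hBR μ hμ0 hμ
    refine (hone R (by omega) hBR μ hμ0 hμ).trans ?_
    apply mul_le_mul_of_nonneg_left _ hc
    have := div_nonneg (hsum R) hsl.le
    linarith
  | succ N ih =>
    intro R hR hBR μ hμ0 hμ
    by_cases hRl : R.card ≤ l
    · refine (hone R hRl hBR μ hμ0 hμ).trans ?_
      apply mul_le_mul_of_nonneg_left _ hc
      have := div_nonneg (hsum R) hsl.le
      linarith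
    · obtain ⟨T, hTR, hTc, hT⟩ := exists_top (fun i => l2norm (D i)) l R (by omega)
      have hdisj : Disjoint T (R \ T) := Finset.disjoint_sdiff
      have hRu : R = T ∪ (R \ T) := (Finset.union_sdiff_of_subset hTR).symm
      set μ' : ℝ := (∑ i ∈ T, l2norm (D i)) / l with hμ'
      have hμ'0 : 0 ≤ μ' := div_nonneg (hsum T) hl'.le
      have h1 := hone T hTc.le (hBR.mono_right hTR) μ hμ0 fun i hi => hμ i (hTR hi)
      have h2 := ih (R \ T) (by rw [Finset.card_sdiff_of_subset hTR]; omega)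
        (hBR.mono_right Finset.sdiff_subset) μ' hμ'0 (by
          intro j hj
          rw [hμ', le_div_iff₀ hl']
          calc l2norm (D j) * l = ∑ i ∈ T, l2norm (D j) := by simp [hTc, mul_comm]
            _ ≤ _ := Finset.sum_le_sum fun i hi => hT i hi j hj)
      have h3 : ip (X * U) (X * restr D R) = ip (X * U) (X * restr D T)
          + ip (X * U) (X * restr D (R \ T)) := by
        conv_lhs => rw [hRu, restr_union D _ _ hdisj, Matrix.mul_add, ip_add_right]
      have h4 : ∑ i ∈ R, l2norm (D i) = ∑ i ∈ T, l2norm (D i) + ∑ i ∈ R \ T, l2norm (D i) := by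
        conv_lhs => rw [hRu, Finset.sum_union hdisj]
      have h5 : Real.sqrt l * μ' = (∑ i ∈ T, l2norm (D i)) / Real.sqrt l := by
        rw [hμ']
        have := Real.mul_self_sqrt hl'.le
        rw [eq_div_iff hsl.ne', mul_comm, ← mul_assoc, this]
        field_simp
      rw [h3, h4]
      refine (abs_add_le _ _).trans ((add_le_add h1 h2).trans (le_of_eq ?_))
      rw [h5]; ring

/-- The restricted eigenvalue bound on the cone. -/
lemma re_bound {n p m : ℕ} (X : Matrix (Fin n) (Fin p) ℝ) (k s : ℕ) (hk : k ≤ p) (hs : 1 ≤ s)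
    (hsk : 2 * s ≤ k) (cs : ℝ) (hcs : 0 < cs)
    (h6 : 6 * cs ≤ Real.sqrt ((k : ℝ) / s - 1))
    (hd : kappaPlusSq X k - kappaMinusSq X (2 * k) ≤ cs * kappaMinusSq X k)
    (S : Finset (Fin p)) (hS : S.card ≤ s) (D : Matrix (Fin p) (Fin m) ℝ)
    (hcone : ∑ i ∈ Sᶜ, l2norm (D i) ≤ 3 * ∑ i ∈ S, l2norm (D i)) :
    kappaMinusSq X k / 2 * frobNorm (restr D S) ≤ Real.sqrt (kappaPlusSq X k) * frobNorm (X * D) := by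
  set l := k - s with hl
  have hl1 : 1 ≤ l := by omega
  have hl' : (0 : ℝ) < l := by exact_mod_cast hl1
  have hs' : (0 : ℝ) < s := by exact_mod_cast hs
  have hsl : 0 < Real.sqrt l := Real.sqrt_pos.2 hl'
  have ha := kappaMinusSq_nonneg X k
  have hb := kappaPlusSq_nonneg X k
  have hsum : ∀ R : Finset (Fin p), 0 ≤ ∑ i ∈ R, l2norm (D i) :=
    fun R => Finset.sum_nonneg fun _ _ => l2norm_nonneg _
  -- the split
  obtain ⟨T, hT, hTcard, hTb⟩ : ∃ T : Finset (Fin p), S ⊆ T ∧ T.card ≤ k ∧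
      |ip (X * restr D T) (X * restr D Tᶜ)| ≤ cs * kappaMinusSq X k * frobNorm (restr D T) *
        ((∑ i ∈ Sᶜ, l2norm (D i)) / Real.sqrt l) := by
    by_cases hc : (Sᶜ : Finset (Fin p)).card ≤ l
    · refine ⟨Finset.univ, Finset.subset_univ _, ?_, ?_⟩
      · have := Finset.card_add_card_compl S
        rw [Finset.card_univ]; omega
      · have : restr D (Finset.univᶜ) = 0 := by ext i j; simp [restr]
        rw [this, Matrix.mul_zero]
        have : ip (X * restr D Finset.univ) 0 = 0 := by simp [ip]
        rw [this, abs_zero]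
        have := div_nonneg (hsum Sᶜ) hsl.le
        have := frobNorm_nonneg (restr D Finset.univ)
        positivity
    · obtain ⟨P, hPS, hPc, hP⟩ := exists_top (fun i => l2norm (D i)) l Sᶜ (by omega)
      have hdSP : Disjoint S P := (Finset.disjoint_left.2 fun i hi hi' => by
        have := hPS hi'; simp at this; exact this hi)
      refine ⟨S ∪ P, Finset.subset_union_left, ?_, ?_⟩
      · rw [Finset.card_union_of_disjoint hdSP]; omega
      · have hcompl : (S ∪ P)ᶜ = Sᶜ \ P := by ext i; simp
        rw [hcompl]
        have hbl := block_bound X k hk (cs * kappaMinusSq X k) (by positivity) hd l hl1 (by omega) D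
          (restr D (S ∪ P)) (S ∪ P) (by rw [Finset.card_union_of_disjoint hdSP]; omega)
          (restr_not_mem D _) _ (Sᶜ \ P) le_rfl (by
            rw [← hcompl]; exact disjoint_compl_right)
          ((∑ i ∈ P, l2norm (D i)) / l) (div_nonneg (hsum P) hl'.le) (by
            intro j hj
            rw [le_div_iff₀ hl']
            calc l2norm (D j) * l = ∑ i ∈ P, l2norm (D j) := by simp [hPc, mul_comm]
              _ ≤ _ := Finset.sum_le_sum fun i hi => hP i hi j hj)
        refine hbl.trans (le_of_eq ?_)
        have h5 : Real.sqrt l * ((∑ i ∈ P, l2norm (D i)) / l)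
            = (∑ i ∈ P, l2norm (D i)) / Real.sqrt l := by
          have := Real.mul_self_sqrt hl'.le
          rw [eq_div_iff hsl.ne', mul_comm, ← mul_assoc, this]
          field_simp
        have h4 : ∑ i ∈ Sᶜ, l2norm (D i) = ∑ i ∈ P, l2norm (D i)
            + ∑ i ∈ Sᶜ \ P, l2norm (D i) := by
          rw [add_comm, Finset.sum_sdiff hPS]
        rw [h5, h4]; ring
  set FT := frobNorm (restr D T) with hFT
  set FS := frobNorm (restr D S) with hFS
  have hFT0 : 0 ≤ FT := frobNorm_nonneg _
  have hFS0 : 0 ≤ FS := frobNorm_nonneg _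
  have hST : FS ≤ FT := by
    apply abs_le_of_sq_le_sq' _ hFT0 |>.2
    rw [hFS, hFT, frob_restr, frob_restr]
    exact Finset.sum_le_sum_of_subset_of_nonneg hT fun _ _ _ => sq_nonneg _
  have hS1 : ∑ i ∈ S, l2norm (D i) ≤ Real.sqrt s * FS := by
    apply abs_le_of_sq_le_sq' _ (by positivity) |>.2
    rw [mul_pow, Real.sq_sqrt hs'.le, hFS, frob_restr]
    refine (sq_sum_le_card_mul_sum_sq).trans ?_
    have : (S.card : ℝ) ≤ s := by exact_mod_cast hS
    gcongr
  have hls : Real.sqrt ((k : ℝ) / s - 1) = Real.sqrt l / Real.sqrt s := by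
    rw [← Real.sqrt_div' _ hs'.le]
    congr 1
    rw [hl, Nat.cast_sub (by omega)]
    field_simp
  have hss : 0 < Real.sqrt s := Real.sqrt_pos.2 hs'
  rw [hls, le_div_iff₀ hss] at h6
  have hmain : cs * ((∑ i ∈ Sᶜ, l2norm (D i)) / Real.sqrt l) ≤ FS / 2 := by
    rw [← mul_div_assoc, div_le_iff₀ hsl]
    have : cs * ∑ i ∈ Sᶜ, l2norm (D i) ≤ cs * (3 * (Real.sqrt s * FS)) := by
      gcongr; linarith
    nlinarith [mul_le_mul_of_nonneg_right h6 hFS0]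
  have hbound : |ip (X * restr D T) (X * restr D Tᶜ)| ≤ kappaMinusSq X k / 2 * FT ^ 2 := by
    refine hTb.trans ?_
    calc cs * kappaMinusSq X k * FT * ((∑ i ∈ Sᶜ, l2norm (D i)) / Real.sqrt l)
        = kappaMinusSq X k * FT * (cs * ((∑ i ∈ Sᶜ, l2norm (D i)) / Real.sqrt l)) := by ring
      _ ≤ kappaMinusSq X k * FT * (FS / 2) := by gcongr
      _ ≤ kappaMinusSq X k * FT * (FT / 2) := by gcongr
      _ = _ := by ring
  have hlow := kappa_lower X k T hTcard (restr D T) (restr_not_mem D T)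
  have hup := kappa_upper X k hk T hTcard (restr D T) (restr_not_mem D T)
  have hup' : frobNorm (X * restr D T) ≤ Real.sqrt (kappaPlusSq X k) * FT := by
    apply abs_le_of_sq_le_sq' _ (by positivity) |>.2
    rw [mul_pow, Real.sq_sqrt hb]; exact hup
  have hsplit : ip (X * restr D T) (X * D) = frobNorm (X * restr D T) ^ 2
      + ip (X * restr D T) (X * restr D Tᶜ) := by
    have : D = restr D T + restr D Tᶜ := by
      rw [← restr_union D T Tᶜ disjoint_compl_right, Finset.union_compl, restr_univ]
    have h2 : X * D = X * restr D T + X * restr D Tᶜ := by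
      rw [← Matrix.mul_add, ← this]
    rw [h2, ip_add_right, ip_self]
  have hcs := ip_le (X * restr D T) (X * D)
  rw [hsplit] at hcs
  have h7 := (abs_le.1 hbound).1
  have h8 : kappaMinusSq X k / 2 * FT ^ 2 ≤ Real.sqrt (kappaPlusSq X k) * FT * frobNorm (X * D) := by
    have := mul_le_mul_of_nonneg_right hup' (frobNorm_nonneg (X * D))
    linarith
  have hf := frobNorm_nonneg (X * D)
  rcases hFT0.eq_or_lt with h0 | hpos
  · have : FS = 0 := by linarith
    rw [this]; simp; positivity
  · have h9 : kappaMinusSq X k / 2 * FT ≤ Real.sqrt (kappaPlusSq X k) * frobNorm (X * D) := by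
      have : FT * (kappaMinusSq X k / 2 * FT) ≤ FT * (Real.sqrt (kappaPlusSq X k) * frobNorm (X * D)) := by
        linarith
      exact le_of_mul_le_mul_left this hpos
    refine le_trans ?_ h9
    gcongr

/-! ### Lasso basic inequality -/

lemma lasso_basic {n p m : ℕ} (X : Matrix (Fin n) (Fin p) ℝ) (A A0 : Matrix (Fin p) (Fin m) ℝ)
    (z : Matrix (Fin n) (Fin m) ℝ) (lam : ℝ) (hlam : 0 < lam)
    (hmin : frobNorm (X * A + z - X * A0) ^ 2 / 2 + lam * norm21 A0 ≤
          frobNorm (X * A + z - X * A) ^ 2 / 2 + lam * norm21 A)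
    (hz : ∀ j, l2norm (fun k => ∑ i, X i j * z i k) ≤ lam / 2)
    (S : Finset (Fin p)) (hS : ∀ i, i ∉ S → A i = 0) :
    frobNorm (X * (A0 - A)) ^ 2 ≤ lam * (3 * ∑ i ∈ S, l2norm ((A0 - A) i)
      - ∑ i ∈ Sᶜ, l2norm ((A0 - A) i)) := by
  set D := A0 - A with hD
  have e1 : X * A + z - X * A0 = z + (-1 : ℝ) • (X * D) := by
    rw [hD, Matrix.mul_sub, neg_one_smul]; abel
  have e2 : X * A + z - X * A = z := by abel
  have e3 : frobNorm (X * A + z - X * A0) ^ 2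
      = frobNorm z ^ 2 - 2 * ip z (X * D) + frobNorm (X * D) ^ 2 := by
    rw [e1, ← ip_self, ip_add_left, ip_add_right, ip_add_right, ip_smul_left, ip_smul_left,
      ip_smul_right, ip_smul_right, ip_comm (X * D) z, ip_self, ip_self]; ring
  rw [e2, e3] at hmin
  have h1 : ip z (X * D) ≤ lam / 2 * (∑ i ∈ S, l2norm (D i) + ∑ i ∈ Sᶜ, l2norm (D i)) := by
    rw [ip_mul, Finset.sum_add_sum_compl, Finset.mul_sum]
    refine Finset.sum_le_sum fun i _ => (dot_le _ _).trans ?_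
    exact mul_le_mul_of_nonneg_right (hz i) (l2norm_nonneg _)
  have h2 : norm21 A - norm21 A0 ≤ ∑ i ∈ S, l2norm (D i) - ∑ i ∈ Sᶜ, l2norm (D i) := by
    unfold norm21
    rw [← Finset.sum_add_sum_compl S, ← Finset.sum_add_sum_compl S (fun i => l2norm (A0 i))]
    have h3 : ∑ i ∈ S, l2norm (A i) - ∑ i ∈ S, l2norm (A0 i) ≤ ∑ i ∈ S, l2norm (D i) := by
      rw [← Finset.sum_sub_distrib]
      refine Finset.sum_le_sum fun i _ => ?_
      have := l2norm_sub_le (A i) (A0 i)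
      have e : A i - A0 i = -(D i) := by rw [hD]; ext j; simp
      rwa [e, l2norm_neg] at this
    have h4 : ∑ i ∈ Sᶜ, l2norm (A i) = 0 := by
      apply Finset.sum_eq_zero
      intro i hi
      rw [hS i (by simpa using hi), l2norm_zero]
    have h5 : ∑ i ∈ Sᶜ, l2norm (A0 i) = ∑ i ∈ Sᶜ, l2norm (D i) := by
      refine Finset.sum_congr rfl fun i hi => ?_
      congr 1
      have := hS i (by simpa using hi)
      rw [hD]; ext j; simp [this]
    linarith
  have h6 := mul_le_mul_of_nonneg_left h2 hlam.le
  nlinarith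

lemma pred_bound {n p m : ℕ} (X : Matrix (Fin n) (Fin p) ℝ) (A A0 : Matrix (Fin p) (Fin m) ℝ)
    (z : Matrix (Fin n) (Fin m) ℝ) (lam : ℝ) (hlam : 0 < lam)
    (hmin : frobNorm (X * A + z - X * A0) ^ 2 / 2 + lam * norm21 A0 ≤
          frobNorm (X * A + z - X * A) ^ 2 / 2 + lam * norm21 A)
    (hz : ∀ j, l2norm (fun k => ∑ i, X i j * z i k) ≤ lam / 2)
    (k s : ℕ) (hk : k ≤ p) (hs : 1 ≤ s)
    (hsk : 2 * s ≤ k) (cs : ℝ) (hcs : 0 < cs)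
    (h6 : 6 * cs ≤ Real.sqrt ((k : ℝ) / s - 1))
    (hd : kappaPlusSq X k - kappaMinusSq X (2 * k) ≤ cs * kappaMinusSq X k)
    (hA : (rowSupport A).card ≤ s) :
    kappaMinusSq X k * frobNorm (X * (A0 - A)) ≤ 6 * lam * Real.sqrt s * kappaPlus X k := by
  have hS : ∀ i, i ∉ rowSupport A → A i = 0 := by
    intro i hi
    simpa [rowSupport] using hi
  set S := rowSupport A with hSdef
  have hb := lasso_basic X A A0 z lam hlam hmin hz S hS
  set D := A0 - A with hD
  set F := frobNorm (X * D) with hF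
  have hF0 : 0 ≤ F := frobNorm_nonneg _
  have hcone : ∑ i ∈ Sᶜ, l2norm (D i) ≤ 3 * ∑ i ∈ S, l2norm (D i) := by
    by_contra h
    push Not at h
    have : lam * (3 * ∑ i ∈ S, l2norm (D i) - ∑ i ∈ Sᶜ, l2norm (D i)) < 0 :=
      mul_neg_of_pos_of_neg hlam (by linarith)
    nlinarith [sq_nonneg F]
  have hre := re_bound X k s hk hs hsk cs hcs h6 hd S hA D hcone
  have hs' : (0 : ℝ) < s := by exact_mod_cast hs
  set FS := frobNorm (restr D S) with hFS
  have hFS0 : 0 ≤ FS := frobNorm_nonneg _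
  have hS1 : ∑ i ∈ S, l2norm (D i) ≤ Real.sqrt s * FS := by
    apply abs_le_of_sq_le_sq' _ (by positivity) |>.2
    rw [mul_pow, Real.sq_sqrt hs'.le, hFS, frob_restr]
    refine (sq_sum_le_card_mul_sum_sq).trans ?_
    have : (S.card : ℝ) ≤ s := by exact_mod_cast hA
    gcongr
  have hSc : 0 ≤ ∑ i ∈ Sᶜ, l2norm (D i) := Finset.sum_nonneg fun _ _ => l2norm_nonneg _
  have h1 : F ^ 2 ≤ 3 * lam * (Real.sqrt s * FS) := by
    refine hb.trans ?_
    have : lam * (3 * ∑ i ∈ S, l2norm (D i) - ∑ i ∈ Sᶜ, l2norm (D i))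
      ≤ lam * (3 * (Real.sqrt s * FS)) := by gcongr; linarith
    linarith
  have ha := kappaMinusSq_nonneg X k
  have hsq : (0 : ℝ) ≤ Real.sqrt s := Real.sqrt_nonneg _
  change _ ≤ 6 * lam * Real.sqrt s * Real.sqrt (kappaPlusSq X k)
  have hb0 : 0 ≤ Real.sqrt (kappaPlusSq X k) := Real.sqrt_nonneg _
  rcases hF0.eq_or_lt with h0 | hpos
  · rw [← h0, mul_zero]; positivity
  · have h2 : F * (kappaMinusSq X k * F) ≤ F * (6 * lam * Real.sqrt s * Real.sqrt (kappaPlusSq X k)) := by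
      calc F * (kappaMinusSq X k * F) = kappaMinusSq X k * F ^ 2 := by ring
        _ ≤ kappaMinusSq X k * (3 * lam * (Real.sqrt s * FS)) := by gcongr
        _ = 6 * lam * Real.sqrt s * (kappaMinusSq X k / 2 * FS) := by ring
        _ ≤ 6 * lam * Real.sqrt s * (Real.sqrt (kappaPlusSq X k) * F) := by gcongr
        _ = _ := by ring
    exact le_of_mul_le_mul_left h2 hpos

/-! ### Singular values -/

section sv
variable {I J : Type*} [Fintype I] [Fintype J]

lemma sv_inner_nonneg (M : Matrix I J ℝ) (V : Submodule ℝ (J → ℝ)) :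
    0 ≤ sInf { u | ∃ v ∈ V, l2norm v = 1 ∧ u = l2norm (M.mulVec v) } := by
  apply Real.sInf_nonneg
  rintro u ⟨v, _, _, rfl⟩
  exact l2norm_nonneg _

lemma sv_inner_bdd (M : Matrix I J ℝ) (V : Submodule ℝ (J → ℝ)) :
    BddBelow { u | ∃ v ∈ V, l2norm v = 1 ∧ u = l2norm (M.mulVec v) } := by
  refine ⟨0, ?_⟩
  rintro u ⟨v, _, _, rfl⟩
  exact l2norm_nonneg _

lemma sv_nonneg (M : Matrix I J ℝ) (j : ℕ) : 0 ≤ singularValue M j := by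
  apply Real.sSup_nonneg
  rintro t ⟨V, _, rfl⟩
  exact sv_inner_nonneg M V

lemma sv_bdd (M : Matrix I J ℝ) (j : ℕ) :
    BddAbove { t | ∃ V : Submodule ℝ (J → ℝ), Module.finrank ℝ V = j ∧
    t = sInf { u | ∃ v ∈ V, l2norm v = 1 ∧ u = l2norm (M.mulVec v) } } := by
  refine ⟨frobNorm M, ?_⟩
  rintro t ⟨V, _, rfl⟩
  rcases Set.eq_empty_or_nonempty { u | ∃ v ∈ V, l2norm v = 1 ∧ u = l2norm (M.mulVec v) } with h | h
  · rw [h, Real.sInf_empty]; exact frobNorm_nonneg _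
  · obtain ⟨u, hu⟩ := h
    refine (csInf_le (sv_inner_bdd M V) hu).trans ?_
    obtain ⟨v, _, hv, rfl⟩ := hu
    have := l2norm_mulVec_le M v
    rwa [hv, mul_one] at this

lemma sv_ge (M : Matrix I J ℝ) (V : Submodule ℝ (J → ℝ)) :
    sInf { u | ∃ v ∈ V, l2norm v = 1 ∧ u = l2norm (M.mulVec v) }
      ≤ singularValue M (Module.finrank ℝ V) :=
  le_csSup (sv_bdd M _) ⟨V, rfl, rfl⟩

lemma sv_weyl (M N : Matrix I J ℝ) (j : ℕ) :
    singularValue M j ≤ singularValue N j + frobNorm (N - M) := by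
  apply Real.sSup_le _ (add_nonneg (sv_nonneg _ _) (frobNorm_nonneg _))
  rintro t ⟨V, rfl, rfl⟩
  have h1 := sv_ge N V
  suffices h : sInf { u | ∃ v ∈ V, l2norm v = 1 ∧ u = l2norm (M.mulVec v) } - frobNorm (N - M)
      ≤ sInf { u | ∃ v ∈ V, l2norm v = 1 ∧ u = l2norm (N.mulVec v) } by linarith
  by_cases hne : ∃ v ∈ V, l2norm v = 1
  · obtain ⟨v0, hv0, hv01⟩ := hne
    refine le_csInf ?_ ?_
    · exact ⟨_, v0, hv0, hv01, rfl⟩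
    rintro u ⟨v, hv, hv1, rfl⟩
    have h2 : sInf { u | ∃ v ∈ V, l2norm v = 1 ∧ u = l2norm (M.mulVec v) } ≤ l2norm (M.mulVec v) :=
      csInf_le (sv_inner_bdd M V) ⟨v, hv, hv1, rfl⟩
    have h3 := l2norm_mulVec_le (N - M) v
    rw [hv1, mul_one, Matrix.sub_mulVec] at h3
    have h4 := l2norm_sub_le (M.mulVec v) (N.mulVec v)
    have h5 : M.mulVec v - N.mulVec v = -(N.mulVec v - M.mulVec v) := by abel
    rw [h5, l2norm_neg] at h4
    linarith
  · have : { u | ∃ v ∈ V, l2norm v = 1 ∧ u = l2norm (M.mulVec v) } = ∅ := by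
      ext u
      simp only [Set.mem_ofPred_eq, Set.mem_empty_iff_false, iff_false]
      rintro ⟨v, hv, hv1, _⟩
      exact hne ⟨v, hv, hv1⟩
    rw [this, Real.sInf_empty]
    have := sv_inner_nonneg N V
    have := frobNorm_nonneg (N - M)
    linarith

lemma exists_sub {E : Type*} [AddCommGroup E] [Module ℝ E] [FiniteDimensional ℝ E]
    (V : Submodule ℝ E) (j : ℕ) (hj : j ≤ Module.finrank ℝ V) :
    ∃ W : Submodule ℝ E, W ≤ V ∧ Module.finrank ℝ W = j := by
  let b := Module.finBasis ℝ V
  let f : Fin j → E := fun i => (b (Fin.castLE hj i) : E)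
  have hli : LinearIndependent ℝ f := by
    have h1 : LinearIndependent ℝ (fun i => (b i : E)) :=
      b.linearIndependent.map' V.subtype V.ker_subtype
    exact h1.comp _ (Fin.castLE_injective hj)
  refine ⟨Submodule.span ℝ (Set.range f), ?_, ?_⟩
  · rw [Submodule.span_le]
    rintro _ ⟨i, rfl⟩
    exact (b (Fin.castLE hj i)).2
  · rw [finrank_span_eq_card hli, Fintype.card_fin]

lemma exists_unit_mem (V : Submodule ℝ (J → ℝ)) (v : J → ℝ) (hv : v ∈ V) (h0 : v ≠ 0) :
    ∃ w ∈ V, l2norm w = 1 ∧ ∃ c : ℝ, w = c • v := by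
  have h : l2norm v ≠ 0 := fun h => h0 (l2norm_eq_zero.1 h)
  refine ⟨(l2norm v)⁻¹ • v, V.smul_mem _ hv, ?_, _, rfl⟩
  rw [l2norm_smul, abs_of_nonneg (inv_nonneg.2 (l2norm_nonneg _)), inv_mul_cancel₀ h]

lemma sv_anti (M : Matrix I J ℝ) (i j : ℕ) (hi : 1 ≤ i) (hij : i ≤ j) :
    singularValue M j ≤ singularValue M i := by
  apply Real.sSup_le _ (sv_nonneg _ _)
  rintro t ⟨V, rfl, rfl⟩
  obtain ⟨W, hWV, rfl⟩ := exists_sub V i hij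
  refine le_trans ?_ (sv_ge M W)
  have : W ≠ ⊥ := by
    intro h
    rw [h, finrank_bot] at hi
    omega
  obtain ⟨v, hv, hv0⟩ := Submodule.exists_mem_ne_zero_of_ne_bot this
  obtain ⟨w, hw, hw1, _⟩ := exists_unit_mem W v hv hv0
  refine csInf_le_csInf (sv_inner_bdd M V) ?_ ?_
  · exact ⟨_, w, hw, hw1, rfl⟩
  rintro u ⟨v, hv, h⟩
  exact ⟨v, hWV hv, h⟩

lemma sv_above_rank (M N : Matrix I J ℝ) (j : ℕ) (hj : M.rank < j) :
    singularValue N j ≤ frobNorm (N - M) := by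
  apply Real.sSup_le _ (frobNorm_nonneg _)
  rintro t ⟨V, rfl, rfl⟩
  let f : V →ₗ[ℝ] LinearMap.range M.mulVecLin := M.mulVecLin.rangeRestrict.comp V.subtype
  have hker : LinearMap.ker f ≠ ⊥ := LinearMap.ker_ne_bot_of_finrank_lt hj
  obtain ⟨x, hx, hx0⟩ := Submodule.exists_mem_ne_zero_of_ne_bot hker
  have hMx : M.mulVec (x : J → ℝ) = 0 := by
    have := congrArg Subtype.val (LinearMap.mem_ker.1 hx)
    simpa [f] using this
  obtain ⟨w, hw, hw1, c, hc⟩ := exists_unit_mem V x x.2 (by simpa using hx0)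
  have hMw : M.mulVec w = 0 := by rw [hc, Matrix.mulVec_smul, hMx, smul_zero]
  refine (csInf_le (sv_inner_bdd N V) ⟨w, hw, hw1, rfl⟩).trans ?_
  have h3 := l2norm_mulVec_le (N - M) w
  rwa [hw1, mul_one, Matrix.sub_mulVec, hMw, sub_zero] at h3

lemma dot_self (v : J → ℝ) : v ⬝ᵥ v = l2norm v ^ 2 := by
  rw [l2norm_sq]; simp [dotProduct, sq]

lemma dotProduct_le_l2 (v w : J → ℝ) : v ⬝ᵥ w ≤ l2norm v * l2norm w := dot_le v w

lemma mulVec_dot (M : Matrix I J ℝ) (v : J → ℝ) (w : I → ℝ) :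
    M.mulVec v ⬝ᵥ w = v ⬝ᵥ Mᵀ.mulVec w := by
  rw [Matrix.mulVec_transpose, dotProduct_comm, Matrix.dotProduct_mulVec, dotProduct_comm]

lemma orth_norm {r : ℕ} (V : Matrix J (Fin r) ℝ) (hV : Vᵀ * V = 1) (x : Fin r → ℝ) :
    l2norm (V.mulVec x) = l2norm x := by
  have : l2norm (V.mulVec x) ^ 2 = l2norm x ^ 2 := by
    rw [← dot_self, mulVec_dot, Matrix.mulVec_mulVec, hV, Matrix.one_mulVec, dot_self]
  exact (pow_left_inj₀ (l2norm_nonneg _) (l2norm_nonneg _) two_ne_zero).1 this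

lemma col_eq {r : ℕ} (V : Matrix J (Fin r) ℝ) (x : Fin r → ℝ) :
    V.mulVec x = ∑ j, x j • (fun i => V i j) := by
  ext i; simp [Matrix.mulVec, dotProduct, mul_comm]

lemma gram_mulVec {r : ℕ} (M : Matrix I J ℝ) (V : Matrix J (Fin r) ℝ)
    (hV : IsRightSingularVectors M V) (x : Fin r → ℝ) :
    Mᵀ.mulVec (M.mulVec (V.mulVec x))
      = V.mulVec (fun j => singularValue M (j.1 + 1) ^ 2 * x j) := by
  rw [Matrix.mulVec_mulVec, col_eq V x, Matrix.mulVec_sum, col_eq]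
  refine Finset.sum_congr rfl fun j _ => ?_
  rw [Matrix.mulVec_smul, hV.2 j, smul_smul, mul_comm]

/-- the inverse action on the span of the right singular vectors -/
lemma gram_inv {r : ℕ} (M : Matrix I J ℝ) (V : Matrix J (Fin r) ℝ)
    (hV : IsRightSingularVectors M V) (hpos : 0 < singularValue M r) (x : Fin r → ℝ) :
    ∃ y : Fin r → ℝ, Mᵀ.mulVec (M.mulVec (V.mulVec y)) = V.mulVec x ∧
      singularValue M r * l2norm (M.mulVec (V.mulVec y)) ≤ l2norm x := by
  set ρ := singularValue M r with hρ
  have hs : ∀ j : Fin r, ρ ≤ singularValue M (j.1 + 1) :=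
    fun j => sv_anti M _ _ (by omega) (by omega)
  have hs0 : ∀ j : Fin r, 0 < singularValue M (j.1 + 1) := fun j => hpos.trans_le (hs j)
  set y : Fin r → ℝ := fun j => x j / singularValue M (j.1 + 1) ^ 2 with hy
  have h1 : Mᵀ.mulVec (M.mulVec (V.mulVec y)) = V.mulVec x := by
    rw [gram_mulVec M V hV]
    congr 1
    funext j
    have := (hs0 j).ne'
    simp only [hy]
    field_simp
  refine ⟨y, h1, ?_⟩
  apply abs_le_of_sq_le_sq' _ (l2norm_nonneg _) |>.2
  rw [mul_pow, ← dot_self (M.mulVec _), mulVec_dot, h1, mulVec_dot, Matrix.mulVec_mulVec, hV.1,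
    Matrix.one_mulVec, l2norm_sq, dotProduct, Finset.mul_sum]
  refine Finset.sum_le_sum fun j _ => ?_
  have h2 : ρ ^ 2 / singularValue M (j.1 + 1) ^ 2 ≤ 1 := by
    have := hs0 j
    rw [div_le_one (by positivity)]
    exact pow_le_pow_left₀ hpos.le (hs j) 2
  calc ρ ^ 2 * (y j * x j) = ρ ^ 2 / singularValue M (j.1 + 1) ^ 2 * x j ^ 2 := by
        simp only [hy]; ring
    _ ≤ 1 * x j ^ 2 := by gcongr
    _ = _ := one_mul _

lemma ker_of_orth {r : ℕ} (M : Matrix I J ℝ) (V : Matrix J (Fin r) ℝ)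
    (hV : IsRightSingularVectors M V) (hpos : 0 < singularValue M r) (hrank : M.rank ≤ r)
    (u : J → ℝ) (hu : Vᵀ.mulVec u = 0) : M.mulVec u = 0 := by
  have hle : LinearMap.range V.mulVecLin ≤ LinearMap.range Mᵀ.mulVecLin := by
    rintro _ ⟨x, rfl⟩
    obtain ⟨y, hy, _⟩ := gram_inv M V hV hpos x
    exact ⟨_, hy⟩
  have hinj : Function.Injective V.mulVecLin := by
    intro a b hab
    have := congrArg Vᵀ.mulVec hab
    simpa [Matrix.mulVec_mulVec, hV.1] using this
  have hfin : Module.finrank ℝ (LinearMap.range V.mulVecLin) = r := by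
    rw [LinearMap.finrank_range_of_inj hinj]; simp
  have heq : LinearMap.range V.mulVecLin = LinearMap.range Mᵀ.mulVecLin := by
    apply Submodule.eq_of_le_of_finrank_le hle
    rw [hfin]
    have : Mᵀ.rank ≤ r := by rw [Matrix.rank_transpose]; exact hrank
    exact this
  have hmem : Mᵀ.mulVec (M.mulVec u) ∈ LinearMap.range V.mulVecLin := by
    rw [heq]; exact ⟨_, rfl⟩
  obtain ⟨w, hw⟩ := hmem
  rw [Matrix.mulVecLin_apply] at hw
  have h2 : l2norm (M.mulVec u) ^ 2 = 0 := by
    rw [← dot_self, mulVec_dot, ← hw, dotProduct_comm, mulVec_dot, hu, dotProduct_zero]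
  exact l2norm_eq_zero.1 (pow_eq_zero_iff two_ne_zero |>.1 h2)

lemma subspace_bound {r : ℕ} (hr : 1 ≤ r) (M M0 : Matrix I J ℝ) (V V0 : Matrix J (Fin r) ℝ)
    (hV : IsRightSingularVectors M V) (hV0 : IsRightSingularVectors M0 V0)
    (hrank : M.rank ≤ r) (hpos : 0 < singularValue M r) (hpos0 : 0 < singularValue M0 r)
    (he : 3 * frobNorm (M0 - M) ≤ singularValue M0 r) :
    1 / 2 < singularValue (Vᵀ * V0) r := by
  have key : ∀ x : Fin r → ℝ, l2norm x = 1 → 2 / 3 ≤ l2norm ((Vᵀ * V0).mulVec x) := by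
    intro x hx
    set v0 := V0.mulVec x with hv0
    set w := Vᵀ.mulVec v0 with hw
    set u := v0 - V.mulVec w with hu
    have hVu : Vᵀ.mulVec u = 0 := by
      have h : Vᵀ.mulVec (V.mulVec w) = w := by
        rw [Matrix.mulVec_mulVec, hV.1, Matrix.one_mulVec]
      rw [hu, Matrix.mulVec_sub, h, ← hw, sub_self]
    have hMu := ker_of_orth M V hV hpos hrank u hVu
    have h1 : l2norm u ^ 2 = u ⬝ᵥ v0 := by
      have h2 : u ⬝ᵥ V.mulVec w = 0 := by
        rw [dotProduct_comm, mulVec_dot, hVu, dotProduct_zero]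
      rw [← dot_self]
      conv_lhs => rw [hu, dotProduct_sub]
      rw [← hu, h2, sub_zero]
    obtain ⟨y, hy1, hy2⟩ := gram_inv M0 V0 hV0 hpos0 x
    rw [hx] at hy2
    have h3 : u ⬝ᵥ v0 = M0.mulVec u ⬝ᵥ M0.mulVec (V0.mulVec y) := by
      rw [mulVec_dot, hy1]
    have h4 : l2norm (M0.mulVec u) ≤ frobNorm (M0 - M) * l2norm u := by
      have := l2norm_mulVec_le (M0 - M) u
      rwa [Matrix.sub_mulVec, hMu, sub_zero] at this
    have h5 := dotProduct_le_l2 (M0.mulVec u) (M0.mulVec (V0.mulVec y))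
    rw [← h3, ← h1] at h5
    set q := l2norm (M0.mulVec (V0.mulVec y)) with hq
    have hq0 : 0 ≤ q := l2norm_nonneg _
    have hu0 := l2norm_nonneg u
    have h6 : l2norm u ≤ 1 / 3 := by
      by_contra h
      push Not at h
      have h7 : l2norm u ^ 2 ≤ frobNorm (M0 - M) * l2norm u * q :=
        h5.trans (mul_le_mul_of_nonneg_right h4 hq0)
      have h8 : l2norm u ≤ frobNorm (M0 - M) * q := by
        have : l2norm u * l2norm u ≤ l2norm u * (frobNorm (M0 - M) * q) := by nlinarith
        exact le_of_mul_le_mul_left this (by linarith)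
      nlinarith [mul_le_mul_of_nonneg_right he hq0]
    have h9 : (Vᵀ * V0).mulVec x = w := by rw [← Matrix.mulVec_mulVec]
    rw [h9, ← orth_norm V hV.1 w]
    have h10 := l2norm_sub_le v0 u
    have h11 : v0 - u = V.mulVec w := by rw [hu]; abel
    rw [h11, hv0, orth_norm V0 hV0.1, hx] at h10
    linarith
  have h := sv_ge (Vᵀ * V0) (⊤ : Submodule ℝ (Fin r → ℝ))
  have hfr : Module.finrank ℝ (⊤ : Submodule ℝ (Fin r → ℝ)) = r := by simp
  rw [hfr] at h
  refine lt_of_lt_of_le ?_ h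
  refine lt_of_lt_of_le (by norm_num : (1 / 2 : ℝ) < 2 / 3) ?_
  apply le_csInf
  · have : (fun _ => 1 : Fin r → ℝ) ≠ 0 := fun h => by
      have := congrFun h ⟨0, hr⟩; simp at this
    obtain ⟨w, hw, _⟩ := exists_unit _ this
    exact ⟨_, w, trivial, hw, rfl⟩
  · rintro t ⟨x, _, hx, rfl⟩
    exact key x hx

end sv

lemma spectral_main {n m r : ℕ} (hr : 1 ≤ r) (M M0 : Matrix (Fin n) (Fin m) ℝ)
    (V : Matrix (Fin m) (Fin r) ℝ) (hV : IsRightSingularVectors M V) (hrank : M.rank ≤ r)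
    (θ ξ : ℝ) (hθ : 0 < θ) (hξ : 0 < ξ) (hξ1 : ξ ≤ 1)
    (hsv : (1 + ξ) * θ ≤ singularValue M r) (he : frobNorm (M0 - M) ≤ ξ * θ / 2) :
    sSup {j : ℕ | θ ≤ singularValue M0 j} = r ∧
            ∀ V0 : Matrix (Fin m) (Fin r) ℝ,
              IsRightSingularVectors M0 V0 → 1 / 2 < singularValue (Vᵀ * V0) r := by
  have hξθ : 0 < ξ * θ := by positivity
  have hξθ1 : ξ * θ ≤ θ := by nlinarith
  have hw := sv_weyl M M0 r
  have hM0 : θ + ξ * θ / 2 ≤ singularValue M0 r := by linarith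
  constructor
  · apply IsGreatest.csSup_eq
    refine ⟨?_, ?_⟩
    · change θ ≤ _; linarith
    · intro j hj
      by_contra h
      push Not at h
      have h1 := sv_above_rank M M0 j (by omega)
      have h2 : θ ≤ singularValue M0 j := hj
      linarith
  · intro V0 hV0
    apply subspace_bound hr M M0 V V0 hV hV0 hrank
    · nlinarith
    · linarith
    · linarith

lemma good_event {n m p : ℕ} (hm : 1 ≤ m) (hp : 1 ≤ p) (X : Matrix (Fin n) (Fin p) ℝ)
    (σ xmax : ℝ) (hσ : 0 < σ) (hx : ∀ j : Fin p, l2norm (Xᵀ j) ≤ xmax) :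
    ENNReal.ofReal (1 - 1 / (p : ℝ)) ≤ gaussianMatrix n m (Real.toNNReal ((2 * σ) ^ 2))
      {z | ∀ j, l2norm (fun k => ∑ i, X i j * z i k) ≤
        2 * σ * xmax * (Real.sqrt m + Real.sqrt (4 * Real.log p))} := by
  have hp' : (1 : ℝ) ≤ p := by exact_mod_cast hp
  set t := Real.sqrt (4 * Real.log p) with ht
  have ht0 : 0 ≤ t := Real.sqrt_nonneg _
  have ht2 : t ^ 2 = 4 * Real.log p := Real.sq_sqrt (by have := Real.log_nonneg hp'; positivity)
  set μ := gaussianMatrix n m (Real.toNNReal ((2 * σ) ^ 2)) with hμ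
  have hprob : μ Set.univ = 1 := by
    have : IsProbabilityMeasure (Measure.pi fun _ : Fin n =>
        Measure.pi fun _ : Fin m => gaussianReal 0 (Real.toNNReal ((2 * σ) ^ 2))) := inferInstance
    exact this.measure_univ
  set G : Set (Matrix (Fin n) (Fin m) ℝ) := {z | ∀ j, l2norm (fun k => ∑ i, X i j * z i k) ≤
        2 * σ * xmax * (Real.sqrt m + t)} with hG
  have hbad : μ Gᶜ ≤ ENNReal.ofReal (1 / (p : ℝ)) := by
    have hsub : Gᶜ ⊆ ⋃ j : Fin p, {z | (2 * σ) * l2norm (Xᵀ j) * (Real.sqrt m + t) <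
        l2norm (fun k => ∑ i, Xᵀ j i * z i k)} := by
      intro z hz
      rw [hG, Set.mem_compl_iff, Set.mem_ofPred_eq] at hz
      push Not at hz
      obtain ⟨j, hj⟩ := hz
      rw [Set.mem_iUnion]
      refine ⟨j, lt_of_le_of_lt ?_ hj⟩
      have := hx j
      have hsm := Real.sqrt_nonneg (m : ℝ)
      gcongr
    refine (measure_mono hsub).trans ((measure_iUnion_le _).trans ?_)
    rw [tsum_fintype]
    calc _ ≤ ∑ j : Fin p, ENNReal.ofReal (Real.exp (-(t ^ 2 / 2))) :=
          Finset.sum_le_sum fun j _ => column_tail hm (Xᵀ j) (2 * σ) t (by positivity) ht0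
      _ = ENNReal.ofReal (1 / (p : ℝ)) := by
        rw [Finset.sum_const, Finset.card_univ, Fintype.card_fin, nsmul_eq_mul,
          ← ENNReal.ofReal_natCast, ← ENNReal.ofReal_mul (by positivity)]
        congr 1
        have : -(t ^ 2 / 2) = -(Real.log p + Real.log p) := by rw [ht2]; ring
        rw [this, Real.exp_neg, Real.exp_add, Real.exp_log (by linarith)]
        field_simp
  have htot : 1 ≤ μ G + μ Gᶜ := by
    rw [← hprob, ← Set.union_compl_self G]
    exact measure_union_le _ _
  rw [ENNReal.ofReal_sub _ (by positivity), ENNReal.ofReal_one, tsub_le_iff_right]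
  exact htot.trans (by gcongr)


set_option maxHeartbeats 2000000 in
/-- Initialization II. For all values a = κ₋(s_*), b = κ₊(s_*) and c_* there exist
a sufficiently large constant C₀, a sufficiently small constant c₁ > 0 and a constant c₀ > 0
(depending only on them) such that: for Y₀ = XA + Z₀ with Z₀ i.i.d. N(0,(2σ)²) entries and
A ∈ Θ(s,r,d,γ), letting A₀ be any pointwise group Lasso minimizer at level
λ₀ = 4σ max_j ‖X_{*j}‖(√m + √(4 log p)), under SE(s_*, c_*, K), η ≥ 2C₀√(s(m+4 log p))/ξ,
σ√(s(m+4 log p)) < c₁d, and σ_r(XA) ≥ (1+ξ)ση: with probability at least 1 − 1/p,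
r̂ = max{j : σ_j(XA₀) ≥ ση} equals r and every matrix V₀ of top-r right singular vectors of
XA₀ satisfies σ_r(V'V₀) > c₀. -/
theorem stmt11 :
    ∀ a b cstar : ℝ, 0 < a → 0 < cstar →
    ∃ C0 c1 c0 : ℝ, 0 < C0 ∧ 0 < c1 ∧ 0 < c0 ∧
    ∀ (n m p s r sstar : ℕ) (d γ σ η ξ xmax lam0 K : ℝ)
      (X : Matrix (Fin n) (Fin p) ℝ) (A : Matrix (Fin p) (Fin m) ℝ)
      (V : Matrix (Fin m) (Fin r) ℝ)
      (A0 : Matrix (Fin n) (Fin m) ℝ → Matrix (Fin p) (Fin m) ℝ),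
      1 ≤ r → 1 ≤ γ → 1 ≤ s →
      memTheta A s r d γ →
      0 < σ → ξ ∈ Set.Ioc (0 : ℝ) 1 →
      -- λ₀ = 4σ max_j ‖X_{*j}‖ (√m + √(4 log p))
      (∀ j : Fin p, l2norm (Xᵀ j) ≤ xmax) → (∃ j : Fin p, l2norm (Xᵀ j) = xmax) →
      lam0 = 4 * σ * xmax * (Real.sqrt m + Real.sqrt (4 * Real.log p)) →
      -- sparse eigenvalue condition SE(s_*, c_*, K)
      1 < K → K⁻¹ ≤ kappaMinus X sstar → kappaMinus X sstar ≤ kappaPlus X sstar →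
      kappaPlus X sstar ≤ K →
      kappaMinus X sstar = a → kappaPlus X sstar = b →
      2 * s ≤ sstar →
      6 * cstar ≤ Real.sqrt ((sstar : ℝ) / (s : ℝ) - 1) →
      (kappaPlusSq X sstar - kappaMinusSq X (2 * sstar)) / kappaMinusSq X sstar < cstar →
      IsRightSingularVectors (X * A) V →
      2 * C0 * Real.sqrt ((s : ℝ) * ((m : ℝ) + 4 * Real.log p)) / ξ ≤ η →
      σ * Real.sqrt ((s : ℝ) * ((m : ℝ) + 4 * Real.log p)) < c1 * d →
      (1 + ξ) * σ * η ≤ singularValue (X * A) r →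
      -- A₀ is a pointwise minimizer of the group Lasso objective for Y₀ = XA + z
      (∀ z : Matrix (Fin n) (Fin m) ℝ, ∀ A' : Matrix (Fin p) (Fin m) ℝ,
        frobNorm (X * A + z - X * A0 z) ^ 2 / 2 + lam0 * norm21 (A0 z) ≤
          frobNorm (X * A + z - X * A') ^ 2 / 2 + lam0 * norm21 A') →
      ENNReal.ofReal (1 - 1 / (p : ℝ)) ≤
        gaussianMatrix n m (Real.toNNReal ((2 * σ) ^ 2))
          {z | sSup {j : ℕ | σ * η ≤ singularValue (X * A0 z) j} = r ∧
            ∀ V0 : Matrix (Fin m) (Fin r) ℝ,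
              IsRightSingularVectors (X * A0 z) V0 → c0 < singularValue (Vᵀ * V0) r} := by

  intro a b cstar ha hcstar
  refine ⟨48 * b ^ 2 / a ^ 2 + 1, 1, 1 / 2, by positivity, one_pos, by norm_num, ?_⟩
  intro n m p s r sstar d γ σ η ξ xmax lam0 K X A V A0 hr _ hs hA hσ hξ hxle hxex hlam hK hKm hmp
    hpK haeq hbeq hss h6 hd hV hη _ hsv hmin
  obtain ⟨hξ0, hξ1⟩ := hξ
  obtain ⟨hArank, hd0, _, _, hAsupp⟩ := hA
  have hm : 1 ≤ m := by
    have := A.rank_le_width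
    omega
  obtain ⟨j0, hj0⟩ := hxex
  have hp : 1 ≤ p := by have := j0.2; omega
  have hp' : (1 : ℝ) ≤ p := by exact_mod_cast hp
  have hm' : (1 : ℝ) ≤ m := by exact_mod_cast hm
  have hs' : (1 : ℝ) ≤ s := by exact_mod_cast hs
  have hkp : sstar ≤ p := by
    by_contra h
    push Not at h
    rw [kappaMinus, kappaMinusSq_eq_zero X sstar h, Real.sqrt_zero] at haeq
    linarith
  have hab : a ≤ b := by rw [← haeq, ← hbeq]; exact hmp
  have hb : 0 < b := by linarith
  have ha2 : kappaMinusSq X sstar = a ^ 2 := by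
    rw [← haeq, kappaMinus, Real.sq_sqrt (kappaMinusSq_nonneg _ _)]
  have hb2 : kappaPlusSq X sstar = b ^ 2 := by
    rw [← hbeq, kappaPlus, Real.sq_sqrt (kappaPlusSq_nonneg _ _)]
  have hcol : ∀ v : ℝ, l2norm (X.mulVec (Pi.single j0 1)) = xmax := by
    intro _
    rw [← hj0]; congr 1; ext i; simp
  have hunit : l2norm (Pi.single j0 1 : Fin p → ℝ) = 1 := by
    have : l2norm (Pi.single j0 1 : Fin p → ℝ) ^ 2 = 1 := by
      rw [l2norm_sq, Finset.sum_eq_single j0]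
      · simp
      · intro i _ hi; simp [hi]
      · simp
    have h0 := l2norm_nonneg (Pi.single j0 1 : Fin p → ℝ)
    nlinarith
  have hsupp : ∀ i, i ∉ ({j0} : Finset (Fin p)) → (Pi.single j0 1 : Fin p → ℝ) i = 0 := by
    intro i hi
    have : i ≠ j0 := by simpa using hi
    simp [this]
  have hx1 := kappa_lower_vec X sstar {j0} (by simp; omega) _ hsupp
  have hx2 := kappa_upper_vec X sstar hkp {j0} (by simp; omega) _ hsupp
  rw [hcol 0, hunit, ha2] at hx1
  rw [hcol 0, hunit, hb2] at hx2
  have hxm0 : 0 ≤ xmax := by rw [← hj0]; exact l2norm_nonneg _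
  have hxb : xmax ≤ b := by nlinarith
  have hxpos : 0 < xmax := by
    rcases hxm0.eq_or_lt with h | h
    · rw [← h] at hx1; nlinarith
    · exact h
  set L := 4 * Real.log p with hL
  have hL0 : 0 ≤ L := by have := Real.log_nonneg hp'; positivity
  have hsm : 0 < Real.sqrt m := Real.sqrt_pos.2 (by linarith)
  have hlampos : 0 < lam0 := by rw [hlam]; positivity
  have hdelta : kappaPlusSq X sstar - kappaMinusSq X (2 * sstar) ≤ cstar * kappaMinusSq X sstar := by
    rw [div_lt_iff₀ (by rw [ha2]; positivity)] at hd
    exact hd.le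
  set R := Real.sqrt ((s : ℝ) * (m + L)) with hR
  have hR0 : 0 < R := Real.sqrt_pos.2 (by positivity)
  have hC0 : 0 < 48 * b ^ 2 / a ^ 2 + 1 := by positivity
  have hηξ : 2 * (48 * b ^ 2 / a ^ 2 + 1) * R ≤ ξ * η := by
    rw [div_le_iff₀ hξ0] at hη
    linarith
  have hηpos : 0 < η := by
    have : 0 < ξ * η := lt_of_lt_of_le (by positivity) hηξ
    exact pos_of_mul_pos_right this hξ0.le
  refine (good_event hm hp X σ xmax hσ hxle).trans (measure_mono ?_)
  intro z hz
  have hz' : ∀ j, l2norm (fun k => ∑ i, X i j * z i k) ≤ lam0 / 2 := by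
    intro j
    refine (hz j).trans (le_of_eq ?_)
    rw [hlam]; ring
  have hpred := pred_bound X A (A0 z) z lam0 hlampos (hmin z A) hz' sstar s hkp hs hss cstar hcstar
    h6 hdelta hAsupp
  rw [ha2, hbeq] at hpred
  have hsum : Real.sqrt s * (Real.sqrt m + Real.sqrt L) ≤ 2 * R := by
    have h1 : Real.sqrt m ≤ Real.sqrt (m + L) := Real.sqrt_le_sqrt (by linarith)
    have h2 : Real.sqrt L ≤ Real.sqrt (m + L) := Real.sqrt_le_sqrt (by linarith)
    have h3 : R = Real.sqrt s * Real.sqrt (m + L) := Real.sqrt_mul (by linarith) _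
    rw [h3]
    calc Real.sqrt s * (Real.sqrt m + Real.sqrt L)
        ≤ Real.sqrt s * (Real.sqrt (m + L) + Real.sqrt (m + L)) :=
          mul_le_mul_of_nonneg_left (add_le_add h1 h2) (Real.sqrt_nonneg _)
      _ = 2 * (Real.sqrt s * Real.sqrt (m + L)) := by ring
  have hF : frobNorm (X * (A0 z - A)) ≤ 48 * b ^ 2 / a ^ 2 * (σ * R) := by
    have h1 : a ^ 2 * frobNorm (X * (A0 z - A)) ≤ 48 * b ^ 2 * (σ * R) := by
      calc _ ≤ 6 * lam0 * Real.sqrt s * b := hpred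
        _ = 24 * σ * xmax * b * (Real.sqrt s * (Real.sqrt m + Real.sqrt L)) := by rw [hlam]; ring
        _ ≤ 24 * σ * b * b * (2 * R) := by gcongr
        _ = _ := by ring
    rw [div_mul_eq_mul_div, le_div_iff₀ (by positivity)]
    linarith
  have hfin : frobNorm (X * A0 z - X * A) ≤ ξ * (σ * η) / 2 := by
    rw [← Matrix.mul_sub]
    have h1 := mul_le_mul_of_nonneg_left hηξ hσ.le
    have h2 : 0 < σ * R := mul_pos hσ hR0
    have h3 : σ * (2 * (48 * b ^ 2 / a ^ 2 + 1) * R)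
        = 2 * (48 * b ^ 2 / a ^ 2 * (σ * R)) + 2 * (σ * R) := by ring
    have h4 : σ * (ξ * η) = ξ * (σ * η) := by ring
    rw [h3, h4] at h1
    linarith
  exact spectral_main hr (X * A) (X * A0 z) V hV ((Matrix.rank_mul_le_right X A).trans hArank.le)
    (σ * η) ξ (by positivity) hξ0 hξ1 (by linarith) hfin

end
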